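/- arXiv:1610.04439 — 4 statements merged into one kernel-verified Lean document; each statement's English description precedes it below -/
import Mathlib

section
/- There exists an infinite word over a 3-letter alphabet that avoids the circular formula C_3 = ABCA.BCAB.CABC, i.e., there is no map h assigning to each of the variables A, B, C a nonempty finite word over the 3-letter alphabet such that all three of the words h(A)h(B)h(C)h(A), h(B)h(C)h(A)h(B), h(C)h(A)h(B)h(C) are factors of the infinite word. (This is the upper bound λ(C_3) ≤ 3.) -/
/-- `u` is a factor of the infinite word `x`: for some index `i`,
`u` equals the block `x i, x (i+1), …` of length `|u|`. -/
def IsFactorOfInf {α : Type*} (u : List α) (x : ℕ → α) : Prop :=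
  ∃ i : ℕ, u = (List.range u.length).map fun j => x (i + j)

/-- The 3-letter word built from the paperfolding sequence (indexed from `1`): with `m` the odd part
of `N`, the letter is `2` if `m % 4 = 3`; otherwise it is `0` for odd `N` and `1` for even `N`. -/
def pfw (N : ℕ) : Fin 3 :=
  if ordCompl[2] N % 4 = 1 then (if N % 2 = 1 then 0 else 1) else 2

lemma ordCompl_two_mul (s m : ℕ) (hm : m % 2 = 1) : ordCompl[2] (2 ^ s * m) = m := by
  have h2 : ¬ 2 ∣ m := by omega
  have hm0 : m ≠ 0 := by omega
  have hf : (2 ^ s * m).factorization 2 = s := by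
    rw [Nat.factorization_mul (by positivity) hm0, Nat.Prime.factorization_pow Nat.prime_two]
    simp [Nat.factorization_eq_zero_of_not_dvd h2]
  rw [hf]
  exact Nat.mul_div_cancel_left _ (by positivity)

/-- The letter `0` marks exactly the positions congruent to `1` modulo `4`. -/
lemma pfw_zero (N : ℕ) : pfw N = 0 ↔ N % 4 = 1 := by
  unfold pfw
  constructor
  · intro h
    split_ifs at h with h1 h2
    · have := ordCompl_two_mul 0 N h2
      simp only [pow_zero, one_mul] at this
      omega
    · exact absurd h (by decide)
    · exact absurd h (by decide)
  · intro h
    have := ordCompl_two_mul 0 N (by omega)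
    simp only [pow_zero, one_mul] at this
    rw [this, if_pos h, if_pos (by omega)]

lemma pfw_ne (s m m' : ℕ) (hm : m % 2 = 1) (h : m' % 4 = (m + 2) % 4) :
    pfw (2 ^ s * m) ≠ pfw (2 ^ s * m') := by
  unfold pfw
  rw [ordCompl_two_mul s m hm, ordCompl_two_mul s m' (by omega)]
  have hp : 2 ^ s * m % 2 = 2 ^ s * m' % 2 := by
    rw [Nat.mul_mod, Nat.mul_mod _ m', hm, show m' % 2 = 1 by omega]
  rw [hp]
  have : m % 4 = 1 ∨ m % 4 = 3 := by omega
  rcases this with h1 | h1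
  · have h3 : ¬ m' % 4 = 1 := by omega
    simp only [h1, h3, if_true, if_false]
    split_ifs <;> decide
  · have h2 : ¬ m % 4 = 1 := by omega
    have h3 : m' % 4 = 1 := by omega
    simp only [h2, h3, if_true, if_false]
    split_ifs <;> decide

/-- Positions `N ≡ 2^t (mod 2^(t+1))` and `N + 2^(t+1) q` with `q` odd carry different letters. -/
lemma pfw_ne_add (t N q : ℕ) (hN : N % 2 ^ (t + 1) = 2 ^ t) (hq : q % 2 = 1) :
    pfw N ≠ pfw (N + 2 ^ (t + 1) * q) := by
  have h1 : N = 2 ^ t * (2 * (N / 2 ^ (t + 1)) + 1) := by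
    have := Nat.div_add_mod N (2 ^ (t + 1))
    rw [hN] at this
    calc N = 2 ^ (t + 1) * (N / 2 ^ (t + 1)) + 2 ^ t := this.symm
      _ = _ := by ring
  generalize N / 2 ^ (t + 1) = e at h1
  have h2 : N + 2 ^ (t + 1) * q = 2 ^ t * (2 * e + 1 + 2 * q) := by rw [h1]; ring
  rw [h2, h1]
  exact pfw_ne t _ _ (by omega) (by omega)

lemma exists_residue (N Q r : ℕ) (hr : r < Q) : ∃ j < Q, (N + j) % Q = r := by
  have hQ : 0 < Q := by omega
  have hlt := Nat.mod_lt N hQ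
  by_cases h : N % Q ≤ r
  · refine ⟨r - N % Q, by omega, ?_⟩
    rw [Nat.add_mod, Nat.mod_eq_of_lt (a := r - N % Q) (by omega),
      show N % Q + (r - N % Q) = r by omega, Nat.mod_eq_of_lt hr]
  · refine ⟨Q + r - N % Q, by omega, ?_⟩
    rw [Nat.add_mod, Nat.mod_eq_of_lt (a := Q + r - N % Q) (by omega),
      show N % Q + (Q + r - N % Q) = r + Q by omega, Nat.add_mod_right, Nat.mod_eq_of_lt hr]

/-- Synchronisation: a window of length `p ≥ 4`, `p ≥ 2^r`, determines its position mod `2^r`. -/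
lemma sync_add (p r N d : ℕ) (h4 : 4 ≤ p) (hr : 2 ^ r ≤ p)
    (h : ∀ j < p, pfw (N + j) = pfw (N + d + j)) : 2 ^ r ∣ d := by
  by_contra hd
  have hd0 : d ≠ 0 := by rintro rfl; simp at hd
  obtain ⟨t, q, hq, rfl⟩ := Nat.exists_eq_two_pow_mul_odd hd0
  have hq' : q % 2 = 1 := Nat.odd_iff.mp hq
  have htr : t < r := by
    by_contra hc
    exact hd (Dvd.dvd.mul_right (pow_dvd_pow 2 (by omega)) q)
  cases t with
  | zero =>
    obtain ⟨j, hj, hj'⟩ := exists_residue N 4 1 (by omega)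
    have h0 := h j (by omega)
    have h1 := (pfw_zero (N + j)).2 hj'
    rw [h0, pfw_zero] at h1
    simp only [pow_zero, one_mul] at h1
    omega
  | succ t =>
    obtain ⟨j, hj, hj'⟩ := exists_residue N (2 ^ (t + 1)) (2 ^ t)
      (Nat.pow_lt_pow_right (by omega) (by omega))
    have hle : 2 ^ (t + 1) ≤ 2 ^ r := Nat.pow_le_pow_right (by omega) (by omega)
    have h0 := h j (by omega)
    apply pfw_ne_add t (N + j) q hj' hq'
    rw [h0]
    congr 1
    ring

lemma sync_modEq (p r N M : ℕ) (h4 : 4 ≤ p) (hr : 2 ^ r ≤ p)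
    (h : ∀ j < p, pfw (N + j) = pfw (M + j)) : N ≡ M [MOD 2 ^ r] := by
  rcases le_total N M with hl | hl
  · obtain ⟨d, rfl⟩ := Nat.exists_eq_add_of_le hl
    exact (Nat.modEq_iff_dvd' hl).2 (by simpa using sync_add p r N d h4 hr h)
  · obtain ⟨d, rfl⟩ := Nat.exists_eq_add_of_le hl
    exact ((Nat.modEq_iff_dvd' hl).2
      (by simpa using sync_add p r M d h4 hr fun j hj => (h j hj).symm)).symm

/-- Arithmetic core: the three fragments cannot all occur. -/
lemma pfw_core (a b c i k l : ℕ) (ha : 0 < a) (hb : 0 < b) (hc : 0 < c)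
    (h12 : ∀ j < a + b + c, pfw (i + a + j) = pfw (k + j))
    (h23 : ∀ j < a + b + c, pfw (k + b + j) = pfw (l + j))
    (h31 : ∀ j < a + b + c, pfw (l + c + j) = pfw (i + j))
    (hA : ∀ j < a, pfw (i + j) = pfw (i + (a + b + c) + j))
    (hB : ∀ j < b, pfw (k + j) = pfw (k + (a + b + c) + j))
    (hC : ∀ j < c, pfw (l + j) = pfw (l + (a + b + c) + j)) : False := by
  have key : ∀ N M, pfw N = pfw M → (N % 4 = 1 ↔ M % 4 = 1) := by
    intro N M h
    rw [← pfw_zero, ← pfw_zero, h]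
  by_cases h3 : a + b + c = 3
  · obtain ⟨rfl, rfl, rfl⟩ : a = 1 ∧ b = 1 ∧ c = 1 := by omega
    have e1 := key _ _ (hA 0 (by omega))
    have e2 := key _ _ (hB 0 (by omega))
    have e3 := key _ _ (hC 0 (by omega))
    have e4 := key _ _ (h12 0 (by omega))
    have e5 := key _ _ (h12 1 (by omega))
    have e6 := key _ _ (h23 0 (by omega))
    omega
  have h4 : 4 ≤ a + b + c := by omega
  have hp0 : a + b + c ≠ 0 := by omega
  obtain ⟨r, q, hq, hpq⟩ := Nat.exists_eq_two_pow_mul_odd hp0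
  have hq' : q % 2 = 1 := Nat.odd_iff.mp hq
  have h2r : 2 ^ r ≤ a + b + c := by
    rw [hpq]; exact Nat.le_mul_of_pos_right _ (by omega)
  have m1 := sync_modEq _ 2 _ _ h4 h4 h12
  have m2 := sync_modEq _ 2 _ _ h4 h4 h23
  have m3 := sync_modEq _ 2 _ _ h4 h4 h31
  have n1 := sync_modEq _ r _ _ h4 h2r h12
  have n2 := sync_modEq _ r _ _ h4 h2r h23
  cases r with
  | zero =>
    simp only [Nat.ModEq] at m1 m2 m3
    simp only [pow_zero, one_mul] at hpq
    omega
  | succ t =>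
    obtain ⟨j, hj, hj'⟩ := exists_residue i (2 ^ (t + 1)) (2 ^ t)
      (Nat.pow_lt_pow_right (by omega) (by omega))
    have hjp : j < a + b + c := by omega
    by_cases c1 : j < a
    · refine pfw_ne_add t (i + j) q hj' hq' ?_
      rw [hA j c1, hpq]; congr 1; ring
    by_cases c2 : j < a + b
    · obtain ⟨e, rfl⟩ := Nat.exists_eq_add_of_le (not_lt.1 c1)
      refine pfw_ne_add t (k + e) q ?_ hq' ?_
      · rw [← hj', ← add_assoc]; exact (n1.add_right e).symm
      · rw [hB e (by omega), hpq]; congr 1; ring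
    · obtain ⟨e, rfl⟩ := Nat.exists_eq_add_of_le (not_lt.1 c2)
      refine pfw_ne_add t (l + e) q ?_ hq' ?_
      · have := ((n1.add_right b).trans n2).add_right e
        rw [← hj', ← add_assoc, ← add_assoc]; exact this.symm
      · rw [hC e (by omega), hpq]; congr 1; ring

/-- `u` occurs in `pfw` at position `i`. -/
def OccAt (u : List (Fin 3)) (i : ℕ) : Prop := ∀ j < u.length, u[j]? = some (pfw (i + j))

lemma occAt_append {u v : List (Fin 3)} {i : ℕ} (h : OccAt (u ++ v) i) :
    OccAt u i ∧ OccAt v (i + u.length) := by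
  constructor
  · intro j hj
    have := h j (by rw [List.length_append]; omega)
    rwa [List.getElem?_append_left hj] at this
  · intro j hj
    have := h (u.length + j) (by rw [List.length_append]; omega)
    rw [List.getElem?_append_right (by omega)] at this
    rw [add_assoc, ← this]
    congr 1
    omega

lemma occAt_eq {u : List (Fin 3)} {i k : ℕ} (h : OccAt u i) (h' : OccAt u k) :
    ∀ j < u.length, pfw (i + j) = pfw (k + j) := by
  intro j hj
  have := (h j hj).symm.trans (h' j hj)
  simpa using this

lemma occAt_of_isFactor {u : List (Fin 3)} (h : IsFactorOfInf u fun n => pfw (n + 1)) :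
    ∃ i, OccAt u i := by
  obtain ⟨i, hi⟩ := h
  refine ⟨i + 1, fun j hj => ?_⟩
  rw [hi, List.getElem?_map, List.getElem?_range hj]
  simp only [Option.map_some]
  congr 2
  ring

theorem stmt_0 :
    ∃ x : ℕ → Fin 3,
      ¬ ∃ hA hB hC : List (Fin 3),
          hA ≠ [] ∧ hB ≠ [] ∧ hC ≠ [] ∧
          IsFactorOfInf (hA ++ hB ++ hC ++ hA) x ∧
          IsFactorOfInf (hB ++ hC ++ hA ++ hB) x ∧
          IsFactorOfInf (hC ++ hA ++ hB ++ hC) x := by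
  refine ⟨fun n => pfw (n + 1), ?_⟩
  rintro ⟨A, B, C, hA, hB, hC, h1, h2, h3⟩
  obtain ⟨i, h1⟩ := occAt_of_isFactor h1
  obtain ⟨k, h2⟩ := occAt_of_isFactor h2
  obtain ⟨l, h3⟩ := occAt_of_isFactor h3
  have p1 := occAt_append h1
  have p2 := occAt_append h2
  have p3 := occAt_append h3
  have s1 := (occAt_append (u := A) (v := B ++ C ++ A) (by simpa using h1)).2
  have s2 := (occAt_append (u := B) (v := C ++ A ++ B) (by simpa using h2)).2
  have s3 := (occAt_append (u := C) (v := A ++ B ++ C) (by simpa using h3)).2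
  have a1 := (occAt_append (u := A) (v := B ++ C ++ A) (by simpa using h1)).1
  have a2 := (occAt_append (u := B) (v := C ++ A ++ B) (by simpa using h2)).1
  have a3 := (occAt_append (u := C) (v := A ++ B ++ C) (by simpa using h3)).1
  have o1 := occAt_eq s1 p2.1
  have o2 := occAt_eq s2 p3.1
  have o3 := occAt_eq s3 p1.1
  have q1 := occAt_eq a1 p1.2
  have q2 := occAt_eq a2 p2.2
  have q3 := occAt_eq a3 p3.2
  simp only [List.length_append] at o1 o2 o3 q1 q2 q3
  refine pfw_core A.length B.length C.length i k l (List.length_pos_iff.2 hA)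
    (List.length_pos_iff.2 hB) (List.length_pos_iff.2 hC)
    (fun j hj => o1 j (by omega)) (fun j hj => o2 j (by omega)) (fun j hj => o3 j (by omega))
    (fun j hj => q1 j hj) (fun j hj => ?_) (fun j hj => ?_)
  · rw [q2 j hj]; congr 1; omega
  · rw [q3 j hj]; congr 1; omega
end

section
/- There exists an infinite word over a 2-letter alphabet that simultaneously avoids every circular formula C_i with i ≥ 4. (Hence λ(C_i) = 2 for every i ≥ 4, since a one-letter alphabet avoids no avoidable formula.) -/
/-- The `i`-th fragment `A_i A_{i+1} … A_{i+t}` of the circular formula `C_t`,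
as the list of variable indices (taken modulo `t`), of length `t + 1`. -/
def circFragment (t i : ℕ) : List ℕ :=
  (List.range (t + 1)).map fun j => (i + j) % t

/-- `h` is an occurrence of the circular formula `C_t` in the infinite word `x`:
`h` assigns a nonempty word to each of the `t` variables, and the `h`-image of
every fragment of `C_t` is a factor of `x`. -/
def CircOcc {α : Type*} (t : ℕ) (h : ℕ → List α) (x : ℕ → α) : Prop :=
  (∀ v < t, h v ≠ []) ∧ ∀ i < t, IsFactorOfInf ((circFragment t i).flatMap h) x


namespace Circ

/-- `x` contains all factors of length `n+1` of some word of period `n`. -/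
def Cyc {α : Type*} (x : ℕ → α) (n : ℕ) : Prop :=
  ∃ c : ℕ → α, (∀ p, c (p + n) = c p) ∧ ∀ p, ∃ i, ∀ j ≤ n, x (i + j) = c (p + j)

/-- Window of length `l` at position `i`. -/
def win {α : Type*} (x : ℕ → α) (i l : ℕ) : List α := (List.range l).map fun j => x (i + j)

section reduction
variable {α : Type*} (t : ℕ) (h : ℕ → List α)

/-- Concatenation of the first `N` periodic blocks. -/
def pref (N : ℕ) : List α := (List.range N).flatMap fun j => h (j % t)

lemma pref_add (a b : ℕ) :
    pref t h (a + b) = pref t h a ++ (List.range b).flatMap fun j => h ((a + j) % t) := by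
  simp [pref, List.range_add, List.flatMap_append, List.flatMap_map]

lemma pref_period (b : ℕ) : pref t h (t + b) = pref t h t ++ pref t h b := by
  rw [pref_add]; simp [pref]

lemma pref_getElem? (a b p : ℕ) (hp : p < (pref t h a).length) (hab : a ≤ b) :
    (pref t h b)[p]? = (pref t h a)[p]? := by
  obtain ⟨d, rfl⟩ := Nat.exists_eq_add_of_le hab
  rw [pref_add, List.getElem?_append_left hp]

lemma pref_length_ge (ht : 0 < t) (hne : ∀ v < t, h v ≠ []) (N : ℕ) :
    N ≤ (pref t h N).length := by
  induction N with
  | zero => simp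
  | succ N ih =>
    rw [pref_add]
    have := List.length_pos_iff.2 (hne (N % t) (Nat.mod_lt _ ht))
    simp
    omega

lemma exists_block (ht : 0 < t) (hne : ∀ v < t, h v ≠ []) (p : ℕ) :
    ∃ k, (pref t h k).length ≤ p ∧ p < (pref t h (k + 1)).length := by
  classical
  have hex : ∃ k, p < (pref t h k).length := ⟨p + 1, pref_length_ge t h ht hne (p + 1)⟩
  have h1 := Nat.find_spec hex
  have h0 : Nat.find hex ≠ 0 := by
    intro h0
    rw [h0] at h1
    simp [pref] at h1
  obtain ⟨k, hk⟩ := Nat.exists_eq_succ_of_ne_zero h0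
  refine ⟨k, ?_, ?_⟩
  · have := Nat.find_min hex (m := k) (by omega)
    omega
  · rw [hk] at h1; exact h1

lemma cyc_of_occ [Inhabited α] (x : ℕ → α) (ht : 0 < t) (hocc : CircOcc t h x) :
    ∃ n, t ≤ n ∧ Cyc x n := by
  obtain ⟨hne, hf⟩ := hocc
  have hge := pref_length_ge t h ht hne
  refine ⟨(pref t h t).length, hge t, fun p => ((pref t h (p + 1))[p]?).getD default, ?_, ?_⟩
  · intro p
    have h1 : (pref t h (t + (p + 1)))[p + (pref t h t).length]? = (pref t h (p + 1))[p]? := by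
      rw [pref_period, List.getElem?_append_right (by omega)]
      simp
    have h2 : p + (pref t h t).length < (pref t h (t + (p + 1))).length := by
      rw [pref_period, List.length_append]
      have := hge (p + 1)
      omega
    have h3 : (pref t h (p + (pref t h t).length + 1))[p + (pref t h t).length]? =
        (pref t h (t + (p + 1)))[p + (pref t h t).length]? := by
      rcases le_total (p + (pref t h t).length + 1) (t + (p + 1)) with hl | hl
      · exact (pref_getElem? t h _ _ _ (hge _) hl).symm
      · exact pref_getElem? t h _ _ _ h2 hl
    simp only [h3, h1]
  · intro p
    obtain ⟨k, hk1, hk2⟩ := exists_block t h ht hne p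
    obtain ⟨i, hi⟩ := hf (k % t) (Nat.mod_lt _ ht)
    have hfr : (circFragment t (k % t)).flatMap h =
        (List.range (t + 1)).flatMap fun j => h ((k + j) % t) := by
      simp [circFragment, List.flatMap_map]
    rw [hfr] at hi
    have hQ := pref_add t h k (t + 1)
    set fr := (List.range (t + 1)).flatMap fun j => h ((k + j) % t) with hfrdef
    refine ⟨i + (p - (pref t h k).length), ?_⟩
    intro j hj
    have hlen : (pref t h (k + (t + 1))).length =
        (pref t h t).length + (pref t h (k + 1)).length := by
      rw [show k + (t + 1) = t + (k + 1) by ring, pref_period, List.length_append]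
    have hlen2 := congrArg List.length hQ
    rw [List.length_append] at hlen2
    have hlt : p - (pref t h k).length + j < fr.length := by omega
    have e1 : fr[p - (pref t h k).length + j]? =
        some (x (i + (p - (pref t h k).length + j))) := by
      rw [hi]
      simp [hlt]
    have e2 : (pref t h (k + (t + 1)))[p + j]? = fr[p - (pref t h k).length + j]? := by
      rw [hQ, List.getElem?_append_right (by omega)]
      congr 1
      omega
    have e3 : (pref t h (p + j + 1))[p + j]? = (pref t h (k + (t + 1)))[p + j]? := by
      rcases le_total (p + j + 1) (k + (t + 1)) with hl | hl
      · exact (pref_getElem? t h _ _ _ (hge _) hl).symm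
      · exact pref_getElem? t h _ _ _ (by omega) hl
    simp only [e3, e2, e1, Option.getD_some]
    congr 1
    omega

end reduction

section desubstitution
variable {α β : Type*}

lemma desub (q : ℕ) (f : β → ℕ → α) (y : ℕ → β) (x : ℕ → α)
    (hx : ∀ b r, r < q → x (q * b + r) = f (y b) r) (u L : ℕ) (hu : u < q)
    (hsuf : ∀ a b, (∀ r, u ≤ r → r < q → f a r = f b r) → a = b)
    (hpre : ∀ a b, (∀ r, r ≤ u → f a r = f b r) → a = b)
    (hsync : ∀ i j, win x i L = win x j L → i % q = j % q)
    (n : ℕ) (hn : L ≤ n) (hn0 : 0 < n) (hc : Cyc x n) : ∃ m, n = q * m ∧ Cyc y m := by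
  obtain ⟨c, hper, hc⟩ := hc
  choose I hI using hc
  have hq : 0 < q := by omega
  have sync : ∀ i j, (∀ k < L, x (i + k) = x (j + k)) → i % q = j % q := by
    intro i j hij
    apply hsync
    simp only [win]
    apply List.map_congr_left
    intro k hk
    exact hij k (List.mem_range.1 hk)
  have hstep : ∀ p, I (p + 1) % q = (I p + 1) % q := by
    intro p
    apply sync
    intro k hk
    rw [hI (p + 1) k (by omega), show I p + 1 + k = I p + (k + 1) by ring,
      hI p (k + 1) (by omega)]
    congr 1; ring
  have hsteps : ∀ d p, I (p + d) % q = (I p + d) % q := by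
    intro d
    induction d with
    | zero => simp
    | succ d ih =>
      intro p
      rw [← add_assoc, hstep, Nat.add_mod, ih, ← Nat.add_mod, add_assoc]
  have hIn : I (0 + n) % q = I 0 % q := by
    apply sync
    intro k hk
    rw [hI _ k (by omega), hI _ k (by omega), ← hper (0 + k)]
    congr 1; ring
  have hdvd : q ∣ n := by
    have h1 := hsteps n 0
    rw [hIn] at h1
    have h2 : (I 0 + 0) ≡ I 0 + n [MOD q] := by simpa [Nat.ModEq] using h1
    exact (Nat.modEq_zero_iff_dvd.1 (Nat.ModEq.add_left_cancel' _ h2).symm)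
  obtain ⟨m, rfl⟩ := hdvd
  have hm : 0 < m := Nat.pos_of_mul_pos_left hn0 |> fun _ => by
    rcases Nat.eq_zero_or_pos m with h | h
    · simp [h] at hn0
    · exact h
  -- choose an origin
  obtain ⟨p0, hp0⟩ : ∃ p0, I p0 % q = 0 := by
    refine ⟨0 + (q - I 0 % q), ?_⟩
    rw [hsteps, Nat.add_mod]
    have := Nat.mod_lt (I 0) hq
    rcases Nat.eq_zero_or_pos (I 0 % q) with h | h
    · simp [h]
    · rw [Nat.mod_eq_of_lt (show q - I 0 % q < q by omega),
        show I 0 % q + (q - I 0 % q) = q by omega, Nat.mod_self]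
  have hpos : ∀ j r, r < q → I (p0 + (q * j + r)) % q = r := by
    intro j r hr
    rw [hsteps, Nat.add_mod, hp0]
    simp [Nat.mod_eq_of_lt hr]
  have hqm : q ≤ q * m := Nat.le_mul_of_pos_right q hm
  let d : ℕ → β := fun j => y (I (p0 + q * j) / q)
  have hd : ∀ j r, r < q → c (p0 + q * j + r) = f (d j) r := by
    intro j r hr
    rw [← hI _ r (by omega)]
    have h1 := hpos j 0 hq
    simp only [add_zero] at h1
    have h2 := Nat.div_add_mod (I (p0 + q * j)) q
    rw [h1, add_zero] at h2
    rw [← hx _ _ hr, h2]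
  refine ⟨m, rfl, d, ?_, ?_⟩
  · intro p
    apply hpre
    intro r hr
    rw [← hd _ r (by omega), ← hd _ r (by omega), ← hper (p0 + q * p + r)]
    congr 1; ring
  · intro p
    set P := p0 + (q * p + u) with hP
    have h1 := hpos p u hu
    have h2 := Nat.div_add_mod (I P) q
    rw [h1] at h2
    refine ⟨I P / q, ?_⟩
    have key : ∀ j r, j ≤ m → r < q → u ≤ q * j + r → q * j + r ≤ q * m + u →
        f (y (I P / q + j)) r = f (d (p + j)) r := by
      intro j r hj hr h3 h4
      have h5 := hI P (q * j + r - u) (by omega)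
      rw [← hx _ _ hr, ← hd _ _ hr]
      rw [show q * (I P / q + j) + r = I P + (q * j + r - u) by rw [mul_add]; omega, h5]
      congr 1
      rw [hP, mul_add]; omega
    intro j hj
    rcases Nat.eq_zero_or_pos j with rfl | hj0
    · apply hsuf
      intro r hr1 hr2
      apply key 0 r (by omega) hr2 (by omega)
      simp; omega
    · apply hpre
      intro r hr
      have h6 : q * 1 ≤ q * j := Nat.mul_le_mul_left _ hj0
      have h7 : q * j ≤ q * m := Nat.mul_le_mul_left _ hj
      exact key j r hj (by omega) (by omega) (by omega)

/-- Image of a list under a `q`-uniform morphism. -/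
def img (q : ℕ) (f : β → ℕ → α) (T : List β) : List α := T.flatMap fun a => (List.range q).map (f a)

/-- Window of length `l` at offset `r` in the image of `T`. -/
def sub (q : ℕ) (f : β → ℕ → α) (l : ℕ) (T : List β) (r : ℕ) : List α := ((img q f T).drop r).take l

/-- All windows of length `l` in images of lists in `S`. -/
def wins (q : ℕ) (f : β → ℕ → α) (l : ℕ) (S : List (List β)) : List (List α) :=
  S.flatMap fun T => (List.range q).map (sub q f l T)

lemma win_add (x : ℕ → α) (i a b : ℕ) : win x i (a + b) = win x i a ++ win x (i + a) b := by
  simp [win, List.range_add, Function.comp_def, add_assoc]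

variable (q : ℕ) (f : β → ℕ → α) (y : ℕ → β) (x : ℕ → α)

lemma win_img (hx : ∀ b r, r < q → x (q * b + r) = f (y b) r) (b k : ℕ) :
    win x (q * b) (q * k) = img q f (win y b k) := by
  induction k with
  | zero => simp [win, img]
  | succ k ih =>
    rw [mul_add, mul_one, win_add, win_add, ih]
    have h1 : win x (q * b + q * k) q = img q f (win y (b + k) 1) := by
      simp only [win, img, List.range_one, List.map_cons, List.map_nil, List.flatMap_cons,
        List.flatMap_nil, List.append_nil, add_zero]
      apply List.map_congr_left
      intro r hr
      rw [← mul_add, hx _ _ (List.mem_range.1 hr)]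
    rw [h1]
    simp [img]

lemma win_sub (hx : ∀ b r, r < q → x (q * b + r) = f (y b) r) (b k r l : ℕ)
    (h : r + l ≤ q * k) : win x (q * b + r) l = sub q f l (win y b k) r := by
  rw [sub, ← win_img q f y x hx]
  obtain ⟨e, he⟩ := Nat.exists_eq_add_of_le h
  rw [he, add_assoc, win_add, win_add]
  have e1 : (win x (q * b) r).length = r := by simp [win]
  have e2 : (win x (q * b + r) l).length = l := by simp [win]
  rw [List.drop_append_of_le_length (by omega), List.drop_of_length_le (by omega),
    List.nil_append, List.take_append_of_le_length (by omega), List.take_of_length_le (by omega)]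

lemma win_mem (hx : ∀ b r, r < q → x (q * b + r) = f (y b) r) (hq : 0 < q) (k l : ℕ)
    (h : q + l ≤ q * k + 1) (S : List (List β)) (i : ℕ) (hS : win y (i / q) k ∈ S) :
    win x i l ∈ wins q f l S := by
  have h1 := Nat.div_add_mod i q
  have h2 := Nat.mod_lt i hq
  simp only [wins, List.mem_flatMap, List.mem_map, List.mem_range]
  refine ⟨_, hS, i % q, h2, ?_⟩
  rw [← win_sub q f y x hx _ _ _ _ (by omega), h1]

lemma sync_of (hx : ∀ b r, r < q → x (q * b + r) = f (y b) r) (hq : 0 < q) (k l : ℕ)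
    (h : q + l ≤ q * k + 1) (S : List (List β)) (hS : ∀ i, win y i k ∈ S)
    (hsep : ∀ T ∈ S, ∀ T' ∈ S, ∀ r < q, ∀ r' < q, sub q f l T r = sub q f l T' r' → r = r')
    (i j : ℕ) (hij : win x i l = win x j l) : i % q = j % q := by
  have h1 := Nat.mod_lt i hq
  have h2 := Nat.mod_lt j hq
  apply hsep _ (hS (i / q)) _ (hS (j / q)) _ h1 _ h2
  rw [← win_sub q f y x hx _ _ _ _ (by omega), ← win_sub q f y x hx _ _ _ _ (by omega),
    Nat.div_add_mod, Nat.div_add_mod]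
  exact hij

end desubstitution

/-- The 3-uniform morphism on four letters. -/
def phi (a : Fin 4) (r : ℕ) : Fin 4 :=
  (([[0, 3, 2], [2, 0, 3], [2, 1, 3], [1, 2, 3]] : List (List (Fin 4))).getD a.val []).getD r 0

/-- The 5-uniform morphism to two letters. -/
def gam (a : Fin 4) (r : ℕ) : Fin 2 :=
  (([[1, 0, 1, 1, 0], [1, 0, 1, 0, 0], [0, 0, 1, 1, 1], [0, 0, 1, 0, 1]] :
    List (List (Fin 2))).getD a.val []).getD r 0

/-- The fixed point of `phi`. -/
def yw (n : ℕ) : Fin 4 :=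
  if h : n = 0 then 0 else phi (yw (n / 3)) (n % 3)
termination_by n
decreasing_by omega

/-- The binary word. -/
def xw (n : ℕ) : Fin 2 := gam (yw (n / 5)) (n % 5)

lemma yw_eq (n : ℕ) : yw n = phi (yw (n / 3)) (n % 3) := by
  rcases Nat.eq_zero_or_pos n with rfl | h
  · have h0 : yw 0 = 0 := by rw [yw]; simp
    simp [h0]; decide
  · conv_lhs => rw [yw]
    rw [dif_neg (by omega)]

lemma hy (b r : ℕ) (hr : r < 3) : yw (3 * b + r) = phi (yw b) r := by
  rw [yw_eq, show (3 * b + r) / 3 = b by omega, show (3 * b + r) % 3 = r by omega]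

lemma hxw (b r : ℕ) (hr : r < 5) : xw (5 * b + r) = gam (yw b) r := by
  rw [xw, show (5 * b + r) / 5 = b by omega, show (5 * b + r) % 5 = r by omega]

/-- Two-letter factors of `yw`. -/
def S2 : List (List (Fin 4)) :=
  [[0, 3], [1, 2], [1, 3], [2, 0], [2, 1], [2, 3], [3, 0], [3, 1], [3, 2]]

lemma yw_S2 (n : ℕ) : win yw n 2 ∈ S2 := by
  induction n using Nat.strong_induction_on with
  | _ n ih =>
    rcases Nat.eq_zero_or_pos n with rfl | h
    · have h0 : yw 0 = 0 := by rw [yw]; simp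
      have h1 : yw 1 = 3 := by rw [yw_eq]; simp [h0]; decide
      simp [win, List.range_succ, h0, h1, S2]
    · have h1 := win_mem 3 phi yw yw hy (by norm_num) 2 2 (by norm_num) S2 n
        (ih (n / 3) (by omega))
      have h2 : ∀ w ∈ wins 3 phi 2 S2, w ∈ S2 := by decide +kernel
      exact h2 _ h1

lemma yw_S3 (n : ℕ) : win yw n 3 ∈ wins 3 phi 3 S2 :=
  win_mem 3 phi yw yw hy (by norm_num) 2 3 (by norm_num) S2 n (yw_S2 _)

lemma yw_F (l : ℕ) (hl : l ≤ 7) (n : ℕ) : win yw n l ∈ wins 3 phi l (wins 3 phi 3 S2) :=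
  win_mem 3 phi yw yw hy (by norm_num) 3 l (by omega) _ n (yw_S3 _)

lemma xw_F (l : ℕ) (hl : l ≤ 6) (n : ℕ) : win xw n l ∈ wins 5 gam l S2 :=
  win_mem 5 gam yw xw hxw (by norm_num) 2 l (by omega) _ n (yw_S2 _)

lemma cyc_win {α : Type*} {x : ℕ → α} {n : ℕ} (hc : Cyc x n) (F : List (List α))
    (hF : ∀ i, win x i (n + 1) ∈ F) :
    ∃ c : ℕ → α, (∀ p, c (p + n) = c p) ∧ ∀ p, win c p (n + 1) ∈ F := by
  obtain ⟨c, h1, h2⟩ := hc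
  refine ⟨c, h1, fun p => ?_⟩
  obtain ⟨i, hi⟩ := h2 p
  have : win c p (n + 1) = win x i (n + 1) := by
    simp only [win]
    apply List.map_congr_left
    intro j hj
    exact (hi j (by have := List.mem_range.1 hj; omega)).symm
  rw [this]
  exact hF i

lemma yw_base (n : ℕ) (h0 : 0 < n) (h5 : n < 5) : ¬ Cyc yw n := by
  intro hc
  obtain ⟨c, hper, hw⟩ := cyc_win hc _ (yw_F (n + 1) (by omega))
  have p0 := hper 0
  have p1 := hper 1
  have p2 := hper 2
  have p3 := hper 3
  have w0 := hw 0
  have w1 := hw 1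
  have w2 := hw 2
  have w3 := hw 3
  interval_cases n
  · have key : ∀ a : Fin 4, ¬ [a, a] ∈ wins 3 phi 2 (wins 3 phi 3 S2) := by decide +kernel
    simp only [win, List.range_succ, List.range_zero, List.nil_append, List.cons_append,
      List.map_cons, List.map_nil, Nat.reduceAdd] at *
    rw [p0] at w0
    exact key _ w0
  · have key : ∀ a b : Fin 4, [a, b, a] ∈ wins 3 phi 3 (wins 3 phi 3 S2) →
        ¬ [b, a, b] ∈ wins 3 phi 3 (wins 3 phi 3 S2) := by decide +kernel
    simp only [win, List.range_succ, List.range_zero, List.nil_append, List.cons_append,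
      List.map_cons, List.map_nil, Nat.reduceAdd] at *
    rw [p0] at w0
    rw [p1, p0] at w1
    exact key _ _ w0 w1
  · have key : ∀ a b c : Fin 4, [a, b, c, a] ∈ wins 3 phi 4 (wins 3 phi 3 S2) →
        [b, c, a, b] ∈ wins 3 phi 4 (wins 3 phi 3 S2) →
        ¬ [c, a, b, c] ∈ wins 3 phi 4 (wins 3 phi 3 S2) := by decide +kernel
    simp only [win, List.range_succ, List.range_zero, List.nil_append, List.cons_append,
      List.map_cons, List.map_nil, Nat.reduceAdd] at *
    rw [p0] at w0
    rw [p1, p0] at w1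
    rw [p2, p1, p0] at w2
    exact key _ _ _ w0 w1 w2
  · have key : ∀ a b c d : Fin 4, [a, b, c, d, a] ∈ wins 3 phi 5 (wins 3 phi 3 S2) →
        [b, c, d, a, b] ∈ wins 3 phi 5 (wins 3 phi 3 S2) →
        [c, d, a, b, c] ∈ wins 3 phi 5 (wins 3 phi 3 S2) →
        ¬ [d, a, b, c, d] ∈ wins 3 phi 5 (wins 3 phi 3 S2) := by decide +kernel
    simp only [win, List.range_succ, List.range_zero, List.nil_append, List.cons_append,
      List.map_cons, List.map_nil, Nat.reduceAdd] at *
    rw [p0] at w0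
    rw [p1, p0] at w1
    rw [p2, p1, p0] at w2
    rw [p3, p2, p1, p0] at w3
    exact key _ _ _ _ w0 w1 w2 w3

lemma xw_base (n : ℕ) (h0 : 4 ≤ n) (h5 : n < 6) : ¬ Cyc xw n := by
  intro hc
  obtain ⟨c, hper, hw⟩ := cyc_win hc _ (xw_F (n + 1) (by omega))
  have p0 := hper 0
  have p1 := hper 1
  have p2 := hper 2
  have p3 := hper 3
  have p4 := hper 4
  have w0 := hw 0
  have w1 := hw 1
  have w2 := hw 2
  have w3 := hw 3
  have w4 := hw 4
  interval_cases n
  · have key : ∀ a b c d : Fin 2, [a, b, c, d, a] ∈ wins 5 gam 5 S2 →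
        [b, c, d, a, b] ∈ wins 5 gam 5 S2 →
        [c, d, a, b, c] ∈ wins 5 gam 5 S2 →
        ¬ [d, a, b, c, d] ∈ wins 5 gam 5 S2 := by decide +kernel
    simp only [win, List.range_succ, List.range_zero, List.nil_append, List.cons_append,
      List.map_cons, List.map_nil, Nat.reduceAdd] at *
    rw [p0] at w0
    rw [p1, p0] at w1
    rw [p2, p1, p0] at w2
    rw [p3, p2, p1, p0] at w3
    exact key _ _ _ _ w0 w1 w2 w3
  · have key : ∀ a b c d e : Fin 2, [a, b, c, d, e, a] ∈ wins 5 gam 6 S2 →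
        [b, c, d, e, a, b] ∈ wins 5 gam 6 S2 →
        [c, d, e, a, b, c] ∈ wins 5 gam 6 S2 →
        [d, e, a, b, c, d] ∈ wins 5 gam 6 S2 →
        ¬ [e, a, b, c, d, e] ∈ wins 5 gam 6 S2 := by decide +kernel
    simp only [win, List.range_succ, List.range_zero, List.nil_append, List.cons_append,
      List.map_cons, List.map_nil, Nat.reduceAdd] at *
    rw [p0] at w0
    rw [p1, p0] at w1
    rw [p2, p1, p0] at w2
    rw [p3, p2, p1, p0] at w3
    rw [p4, p3, p2, p1, p0] at w4
    exact key _ _ _ _ _ w0 w1 w2 w3 w4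

lemma yw_avoid (n : ℕ) (h0 : 0 < n) : ¬ Cyc yw n := by
  induction n using Nat.strong_induction_on with
  | _ n ih =>
    intro hc
    rcases Nat.lt_or_ge n 5 with h | h
    · exact yw_base n h0 h hc
    · have hsuf : ∀ a b : Fin 4, (phi a 1 = phi b 1 ∧ phi a 2 = phi b 2) → a = b := by
        decide +kernel
      have hpre : ∀ a b : Fin 4, (phi a 0 = phi b 0 ∧ phi a 1 = phi b 1) → a = b := by
        decide +kernel
      obtain ⟨m, hm, hcm⟩ := desub 3 phi yw yw hy 1 5 (by norm_num)
        (fun a b hab => hsuf a b ⟨hab 1 (by norm_num) (by norm_num),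
          hab 2 (by norm_num) (by norm_num)⟩)
        (fun a b hab => hpre a b ⟨hab 0 (by norm_num), hab 1 (by norm_num)⟩)
        (sync_of 3 phi yw yw hy (by norm_num) 3 5 (by norm_num) _ yw_S3 (by decide +kernel))
        n h h0 hc
      exact ih m (by omega) (by omega) hcm

lemma xw_avoid (n : ℕ) (h0 : 4 ≤ n) : ¬ Cyc xw n := by
  intro hc
  rcases Nat.lt_or_ge n 6 with h | h
  · exact xw_base n h0 h hc
  · have hsuf : ∀ a b : Fin 4, (gam a 3 = gam b 3 ∧ gam a 4 = gam b 4) → a = b := by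
      decide +kernel
    have hpre : ∀ a b : Fin 4, (gam a 0 = gam b 0 ∧ gam a 1 = gam b 1 ∧ gam a 2 = gam b 2 ∧
        gam a 3 = gam b 3) → a = b := by
      decide +kernel
    obtain ⟨m, hm, hcm⟩ := desub 5 gam yw xw hxw 3 6 (by norm_num)
      (fun a b hab => hsuf a b ⟨hab 3 (by norm_num) (by norm_num),
        hab 4 (by norm_num) (by norm_num)⟩)
      (fun a b hab => hpre a b ⟨hab 0 (by norm_num), hab 1 (by norm_num), hab 2 (by norm_num),
        hab 3 (by norm_num)⟩)
      (sync_of 5 gam yw xw hxw (by norm_num) 2 6 (by norm_num) _ yw_S2 (by decide +kernel))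
      n h (by omega) hc
    exact yw_avoid m (by omega) hcm

end Circ

/-- There exists an infinite word over a 2-letter alphabet that simultaneously
avoids every circular formula `C_i` with `i ≥ 4`. -/
theorem stmt_2 :
    ∃ x : ℕ → Fin 2, ∀ i, 4 ≤ i → ¬ ∃ h : ℕ → List (Fin 2), CircOcc i h x := by
  refine ⟨Circ.xw, fun i hi => ?_⟩
  rintro ⟨h, hocc⟩
  obtain ⟨n, hn, hc⟩ := Circ.cyc_of_occ i h Circ.xw (by omega) hocc
  exact Circ.xw_avoid n (by omega) hc
end

section
/- There exists an infinite word over a 2-letter alphabet that avoids the formula ABCBA.CBABC, i.e., there is no map h assigning nonempty finite binary words to the variables A, B, C such that both h(A)h(B)h(C)h(B)h(A) and h(C)h(B)h(A)h(B)h(C) are factors of the infinite word. (Hence λ(ABCBA.CBABC) = 2.) -/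
namespace ToeplitzAvoid

/-- Value bits of three copies of the skeleton (period 180); position `i` is bit `i`;
holes are at multiples of 30. -/
def VV : ℕ := 3232361122689070503265108499627508320722243279313255770459239057494719582100256639414189360895766039329041702571335011867416898869530502839426651194273882041031016

/-- Mask of the non-holes in three copies of the skeleton. -/
def UU : ℕ := 3599131032282605120641032978031932106272586120094643653807055477329870409742454723645251149047826071497112806969081542578351859973987212349604108855740693691236350

/-- The number `2 ^ 180 - 1`. -/
def full : ℕ := 1532495540865888858358347027150309183618739122183602175

/-- The paperfolding sequence. -/
def pf (t : ℕ) : Bool := (t / 2 ^ (padicValNat 2 t)) / 2 % 2 == 1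

/-- The Toeplitz word. -/
def xb (i : ℕ) : Bool := if i % 30 = 0 then pf (i / 30) else VV.testBit (i % 180)

/-- Positions of certain mismatch at shift `d`. -/
def mism (d : ℕ) : ℕ := (VV ^^^ (VV >>> d)) &&& (UU &&& (UU >>> d))

def smear (M l : ℕ) : ℕ := Nat.rec 0 (fun k s => s ||| (M >>> k)) l

def force (n : ℕ) (f : ℕ → Bool) : Bool := Nat.rec (f 0) (fun k _ => f (k + 1)) n

theorem force_eq (n : ℕ) (f : ℕ → Bool) : force n f = f n := by
  cases n <;> rfl

theorem smear_spec (M l i : ℕ) (h : (smear M l).testBit i = true) :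
    ∃ k < l, M.testBit (i + k) = true := by
  induction l with
  | zero => simp [smear] at h
  | succ l ih =>
    have e : smear M (l + 1) = smear M l ||| (M >>> l) := rfl
    rw [e, Nat.testBit_or, Bool.or_eq_true] at h
    rcases h with h | h
    · obtain ⟨k, hk, h⟩ := ih h
      exact ⟨k, by omega, h⟩
    · rw [Nat.testBit_shiftRight] at h
      exact ⟨l, by omega, by rwa [Nat.add_comm]⟩

def chkUV : Bool := (List.range 540).all fun p =>
  (!(UU.testBit p) || (!(p % 30 == 0))) && (VV.testBit p == VV.testBit (p % 180))

theorem chkUV_true : chkUV = true := by decide +kernel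

theorem UU_spec (p : ℕ) (h : UU.testBit p = true) :
    p % 30 ≠ 0 ∧ VV.testBit p = VV.testBit (p % 180) := by
  have hp : p < 540 := by
    by_contra hc
    have h1 : UU < 2 ^ 540 := by decide +kernel
    have h2 : UU < 2 ^ p := lt_of_lt_of_le h1 (Nat.pow_le_pow_right (by norm_num) (by omega))
    rw [Nat.testBit_lt_two_pow h2] at h
    exact absurd h (by simp)
  have := chkUV_true
  unfold chkUV at this
  rw [List.all_eq_true] at this
  have := this p (by simpa using hp)
  rw [h] at this
  simpa using this

/-- Positions `p`, `r` are certainly different. -/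
def ne (p r : ℕ) : Bool := UU.testBit p && UU.testBit r && (VV.testBit p != VV.testBit r)

theorem ne_spec (s t p r : ℕ) (h : ne p r = true) (hs : s % 180 = p % 180) (ht : t % 180 = r % 180) :
    xb s ≠ xb t := by
  unfold ne at h
  simp only [Bool.and_eq_true, bne_iff_ne] at h
  obtain ⟨⟨h1, h2⟩, h3⟩ := h
  obtain ⟨a1, a2⟩ := UU_spec p h1
  obtain ⟨b1, b2⟩ := UU_spec r h2
  unfold xb
  rw [if_neg (by omega), if_neg (by omega), hs, ht, ← a2, ← b2]
  exact h3

theorem mism_spec (d p : ℕ) (h : (mism d).testBit p = true) : ne p (p + d) = true := by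
  unfold mism at h
  rw [Nat.testBit_and, Nat.testBit_and, Nat.testBit_xor, Nat.testBit_shiftRight,
    Nat.testBit_shiftRight, Nat.add_comm d p] at h
  unfold ne
  revert h
  cases UU.testBit p <;> cases UU.testBit (p + d) <;> cases VV.testBit p <;>
    cases VV.testBit (p + d) <;> simp

theorem full_spec (F i : ℕ) (h : F &&& full = full) (hi : i < 180) : F.testBit i = true := by
  have h1 : full = 2 ^ 180 - 1 := by decide +kernel
  have h2 : full.testBit i = true := by
    rw [h1, Nat.testBit_two_pow_sub_one]; simpa using hi
  rw [← h, Nat.testBit_and] at h2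
  simp only [Bool.and_eq_true] at h2
  exact h2.1

theorem smear_xb (d l i p : ℕ) (h : (smear (mism d) l).testBit p = true) (hi : i % 180 = p % 180)
    (j : ℕ) (hj : j % 180 = (p + d) % 180) : ∃ k < l, xb (i + k) ≠ xb (j + k) := by
  obtain ⟨k, hk, h⟩ := smear_spec _ _ _ h
  exact ⟨k, hk, ne_spec _ _ _ _ (mism_spec _ _ h) (by omega) (by omega)⟩

def len0 (r : ℕ) : ℕ := if r < 30 then (r + 182) / 3 else (r + 2) / 3

def chkRep : Bool := (List.range 179).all fun r =>
  (smear (mism (r + 1)) (len0 (r + 1))) &&& full == full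

theorem chkRep_true : chkRep = true := by decide +kernel

theorem rep1 (P i m : ℕ) (hP : 30 ≤ P) (hm : P ≤ 3 * m) (h0 : P % 180 ≠ 0) :
    ∃ k < m, xb (i + k) ≠ xb (i + P + k) := by
  have := chkRep_true
  unfold chkRep at this
  rw [List.all_eq_true] at this
  have := this (P % 180 - 1) (by simp; omega)
  rw [show P % 180 - 1 + 1 = P % 180 by omega] at this
  have := full_spec _ (i % 180) (by simpa using this) (by omega)
  obtain ⟨k, hk, h⟩ := smear_xb _ _ i _ this (by omega) (i + P) (by omega)
  refine ⟨k, lt_of_lt_of_le hk ?_, h⟩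
  unfold len0
  split_ifs <;> omega

theorem pf_spec (k n : ℕ) : pf (2 ^ k * (2 * n + 1)) = (n % 2 == 1) := by
  unfold pf
  have h : padicValNat 2 (2 ^ k * (2 * n + 1)) = k := by
    rw [padicValNat.mul (by positivity) (by omega), padicValNat.prime_pow,
      padicValNat.eq_zero_of_not_dvd (by omega)]
    rfl
  rw [h, Nat.mul_div_cancel_left _ (by positivity)]
  congr 2
  omega

theorem pf_rep (j t : ℕ) (hj : 1 ≤ j) : ∃ k < 2 * j, pf (t + k) ≠ pf (t + k + 6 * j) := by
  obtain ⟨v, o, ho, hv⟩ := Nat.exists_eq_two_pow_mul_odd (n := j) (by omega)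
  obtain ⟨w, rfl⟩ := ho
  have hpos : 0 < 2 ^ v := by positivity
  -- find `k` with `t + k = 2 ^ v * odd`
  have : ∃ k < 2 * 2 ^ v, ∃ u, t + k = 2 ^ v * (2 * u + 1) := by
    have hd := Nat.div_add_mod t (2 * 2 ^ v)
    have hm := Nat.mod_lt t (show 0 < 2 * 2 ^ v by omega)
    set M := 2 ^ v
    set a := t / (2 * M)
    set r := t % (2 * M)
    by_cases hr : r ≤ M
    · refine ⟨M - r, by omega, a, ?_⟩
      have : M * (2 * a + 1) = 2 * M * a + M := by ring
      omega
    · refine ⟨3 * M - r, by omega, a + 1, ?_⟩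
      have : M * (2 * (a + 1) + 1) = 2 * M * a + 3 * M := by ring
      omega
  obtain ⟨k, hk, u, hu⟩ := this
  refine ⟨k, lt_of_lt_of_le hk ?_, ?_⟩
  · rw [hv]; nlinarith
  · have e : t + k + 6 * j = 2 ^ v * (2 * (u + 3 * (2 * w + 1)) + 1) := by
      rw [hu, hv]; ring
    rw [e, hu, pf_spec, pf_spec]
    intro h
    rw [Bool.eq_iff_iff] at h
    simp only [beq_iff_eq] at h
    omega

theorem rep2 (i m j : ℕ) (hj : 1 ≤ j) (hm : 60 * j ≤ m) :
    ∃ k < m, xb (i + k) ≠ xb (i + 180 * j + k) := by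
  obtain ⟨k, hk, h⟩ := pf_rep j ((i + 29) / 30) hj
  refine ⟨30 * ((i + 29) / 30 + k) - i, by omega, ?_⟩
  have e1 : i + (30 * ((i + 29) / 30 + k) - i) = 30 * ((i + 29) / 30 + k) := by omega
  have e2 : i + 180 * j + (30 * ((i + 29) / 30 + k) - i) = 30 * ((i + 29) / 30 + k + 6 * j) := by
    omega
  rw [e1, e2]
  unfold xb
  rw [if_pos (by omega), if_pos (by omega), Nat.mul_div_cancel_left _ (by norm_num),
    Nat.mul_div_cancel_left _ (by norm_num)]
  exact h

/-- Every repetition of period at least 30 has excess less than a third of its period. -/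
theorem rep (P i m : ℕ) (hP : 30 ≤ P) (h : ∀ k < m, xb (i + k) = xb (i + P + k)) : 3 * m < P := by
  by_contra hc
  have : ∃ k < m, xb (i + k) ≠ xb (i + P + k) := by
    by_cases h0 : P % 180 = 0
    · obtain ⟨j, rfl⟩ : ∃ j, P = 180 * j := ⟨P / 180, by omega⟩
      exact rep2 i m j (by omega) (by omega)
    · exact rep1 P i m hP (by omega) h0
  obtain ⟨k, hk, hne⟩ := this
  exact hne (h k hk)

/-- An occurrence of the formula with lengths `a, b, c` at positions `i, j`. -/
structure Occ (a b c i j : ℕ) : Prop where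
  A1 : ∀ k < a, xb (i + k) = xb (i + (a + 2 * b + c) + k)
  A2 : ∀ k < a, xb (i + k) = xb (j + c + b + k)
  B1 : ∀ k < b, xb (i + a + k) = xb (i + a + (b + c) + k)
  B2 : ∀ k < b, xb (i + a + k) = xb (j + c + k)
  B3 : ∀ k < b, xb (j + c + k) = xb (j + c + (a + b) + k)
  C1 : ∀ k < c, xb (j + k) = xb (j + (a + 2 * b + c) + k)
  C2 : ∀ k < c, xb (i + a + b + k) = xb (j + k)

theorem Occ.symm {a b c i j : ℕ} (h : Occ a b c i j) : Occ c b a j i where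
  A1 k hk := by rw [h.C1 k hk]; congr 1; omega
  A2 k hk := (h.C2 k hk).symm
  B1 k hk := by rw [h.B3 k hk]; congr 1; omega
  B2 k hk := (h.B2 k hk).symm
  B3 k hk := by rw [h.B1 k hk]; congr 1; omega
  C1 k hk := by rw [h.A1 k hk]; congr 1; omega
  C2 k hk := (h.A2 k hk).symm

/-- Some certain mismatch between the blocks of length `l` at `p` and `r`. -/
def anyNe (p r l : ℕ) : Bool := Nat.rec false (fun k s => ne (p + k) (r + k) || s) l

theorem anyNe_spec (p r l s t : ℕ) (h : anyNe p r l = true) (hs : s % 180 = p % 180)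
    (ht : t % 180 = r % 180) : ∃ k < l, xb (s + k) ≠ xb (t + k) := by
  induction l with
  | zero => simp [anyNe] at h
  | succ l ih =>
    have e : anyNe p r (l + 1) = (ne (p + l) (r + l) || anyNe p r l) := rfl
    rw [e, Bool.or_eq_true] at h
    rcases h with h | h
    · exact ⟨l, by omega, ne_spec _ _ _ _ h (by omega) (by omega)⟩
    · obtain ⟨k, hk, h⟩ := ih h
      exact ⟨k, by omega, h⟩

def F1 (a b c : ℕ) : ℕ :=
  smear (mism (a + 2 * b + c)) a ||| (smear (mism (b + c)) b >>> a)

def F2 (a b c : ℕ) : ℕ :=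
  smear (mism (a + 2 * b + c)) c ||| (smear (mism (a + b)) b >>> c)

def pairBad (a b c i j : ℕ) : Bool :=
  anyNe i (j + c + b) a || anyNe (i + a) (j + c) b || anyNe (i + a + b) j c ||
  anyNe (i + (a + 2 * b + c)) (j + c + b) a ||
  anyNe (i + a) (j + c + (a + b)) b ||
  anyNe (i + a + (b + c)) (j + c) b ||
  anyNe (i + a + (b + c)) (j + c + (a + b)) b ||
  anyNe (i + a + b) (j + (a + 2 * b + c)) c

/-- Pass the list of zero bits of `F` below `n` (in front of `acc`) to `f`. -/
def zeros (F : ℕ) (f : List ℕ → Bool) (n : ℕ) : List ℕ → Bool :=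
  Nat.rec f (fun m ih acc => bif F.testBit m then ih acc else ih (m :: acc)) n

theorem zeros_spec (F : ℕ) (f : List ℕ → Bool) (n : ℕ) (acc : List ℕ) :
    ∃ L, zeros F f n acc = f L ∧ acc ⊆ L ∧ ∀ m < n, F.testBit m ≠ true → m ∈ L := by
  induction n generalizing acc with
  | zero => exact ⟨acc, rfl, List.Subset.refl _, by omega⟩
  | succ n ih =>
    have e : zeros F f (n + 1) acc =
      bif F.testBit n then zeros F f n acc else zeros F f n (n :: acc) := rfl
    cases hb : F.testBit n with
    | true =>
      obtain ⟨L, h1, h2, h3⟩ := ih acc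
      refine ⟨L, by rw [e, hb]; exact h1, h2, fun m hm hF => ?_⟩
      rcases Nat.lt_succ_iff_lt_or_eq.1 hm with h | rfl
      · exact h3 m h hF
      · exact absurd hb hF
    | false =>
      obtain ⟨L, h1, h2, h3⟩ := ih (n :: acc)
      refine ⟨L, by rw [e, hb]; exact h1, fun y hy => h2 (List.mem_cons_of_mem _ hy),
        fun m hm hF => ?_⟩
      rcases Nat.lt_succ_iff_lt_or_eq.1 hm with h | rfl
      · exact h3 m h hF
      · exact h2 List.mem_cons_self

def chkSize (a b c : ℕ) : Bool :=
  force (F1 a b c) fun f1 => (f1 &&& full == full) ||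
  force (F2 a b c) fun f2 => (f2 &&& full == full) ||
  zeros f1 (fun l1 => zeros f2 (fun l2 =>
    l1.all fun i => l2.all fun j => pairBad a b c i j) 180 []) 180 []

/-- Sizes not excluded by the repetition bound. -/
def admissible (a b c : ℕ) : Bool :=
  ((a + 2 * b + c).blt 30 || ((3 * a).blt (a + 2 * b + c) && (3 * c).blt (a + 2 * b + c)))
  && ((a + b).blt 30 || (3 * b).blt (a + b))

def chkAll : Bool := (List.range 29).all fun b0 => (List.range (28 - b0)).all fun c0 =>
  (smear (mism (b0 + 1 + (c0 + 1))) (b0 + 1) &&& full == full) || (List.range 29).all fun a0 =>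
    !(admissible (a0 + 1) (b0 + 1) (c0 + 1)) || chkSize (a0 + 1) (b0 + 1) (c0 + 1)

theorem chkAll_true : chkAll = true := by decide +kernel

theorem chkSize_spec (a b c i j : ℕ) (h : chkSize a b c = true) (o : Occ a b c i j) : False := by
  have key1 : (F1 a b c).testBit (i % 180) ≠ true := by
    intro hb
    unfold F1 at hb
    rw [Nat.testBit_or, Bool.or_eq_true, Nat.testBit_shiftRight] at hb
    rcases hb with hb | hb
    · obtain ⟨k, hk, h⟩ := smear_xb _ _ i _ hb (by omega) (i + (a + 2 * b + c)) (by omega)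
      exact h (o.A1 k hk)
    · obtain ⟨k, hk, h⟩ := smear_xb _ _ (i + a) _ hb (by omega) (i + a + (b + c)) (by omega)
      exact h (o.B1 k hk)
  have key2 : (F2 a b c).testBit (j % 180) ≠ true := by
    intro hb
    unfold F2 at hb
    rw [Nat.testBit_or, Bool.or_eq_true, Nat.testBit_shiftRight] at hb
    rcases hb with hb | hb
    · obtain ⟨k, hk, h⟩ := smear_xb _ _ j _ hb (by omega) (j + (a + 2 * b + c)) (by omega)
      exact h (o.C1 k hk)
    · obtain ⟨k, hk, h⟩ := smear_xb _ _ (j + c) _ hb (by omega) (j + c + (a + b)) (by omega)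
      exact h (o.B3 k hk)
  unfold chkSize at h
  rw [force_eq, Bool.or_eq_true] at h
  rcases h with h | h
  · exact key1 (full_spec _ _ (by simpa using h) (by omega))
  rw [force_eq, Bool.or_eq_true] at h
  rcases h with h | h
  · exact key2 (full_spec _ _ (by simpa using h) (by omega))
  obtain ⟨l1, e1, -, m1⟩ := zeros_spec (F1 a b c) (fun l1 => zeros (F2 a b c) (fun l2 =>
    l1.all fun i => l2.all fun j => pairBad a b c i j) 180 []) 180 []
  obtain ⟨l2, e2, -, m2⟩ := zeros_spec (F2 a b c) (fun l2 =>
    l1.all fun i => l2.all fun j => pairBad a b c i j) 180 []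
  rw [e1, e2, List.all_eq_true] at h
  have h := h (i % 180) (m1 _ (by omega) key1)
  rw [List.all_eq_true] at h
  have h := h (j % 180) (m2 _ (by omega) key2)
  unfold pairBad at h
  simp only [Bool.or_eq_true] at h
  rcases h with ((((((h | h) | h) | h) | h) | h) | h) | h
  · obtain ⟨k, hk, h⟩ := anyNe_spec _ _ _ i (j + c + b) h (by omega) (by omega)
    exact h (o.A2 k hk)
  · obtain ⟨k, hk, h⟩ := anyNe_spec _ _ _ (i + a) (j + c) h (by omega) (by omega)
    exact h (o.B2 k hk)
  · obtain ⟨k, hk, h⟩ := anyNe_spec _ _ _ (i + a + b) j h (by omega) (by omega)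
    exact h (o.C2 k hk)
  · obtain ⟨k, hk, h⟩ :=
      anyNe_spec _ _ _ (i + (a + 2 * b + c)) (j + c + b) h (by omega) (by omega)
    exact h ((o.A1 k hk).symm.trans (o.A2 k hk))
  · obtain ⟨k, hk, h⟩ := anyNe_spec _ _ _ (i + a) (j + c + (a + b)) h (by omega) (by omega)
    exact h ((o.B2 k hk).trans (o.B3 k hk))
  · obtain ⟨k, hk, h⟩ := anyNe_spec _ _ _ (i + a + (b + c)) (j + c) h (by omega) (by omega)
    exact h ((o.B1 k hk).symm.trans (o.B2 k hk))
  · obtain ⟨k, hk, h⟩ :=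
      anyNe_spec _ _ _ (i + a + (b + c)) (j + c + (a + b)) h (by omega) (by omega)
    exact h ((o.B1 k hk).symm.trans ((o.B2 k hk).trans (o.B3 k hk)))
  · obtain ⟨k, hk, h⟩ :=
      anyNe_spec _ _ _ (i + a + b) (j + (a + 2 * b + c)) h (by omega) (by omega)
    exact h ((o.C2 k hk).trans (o.C1 k hk))

theorem no_occ_small (a b c i j : ℕ) (ha : 1 ≤ a) (hb : 1 ≤ b) (hc : 1 ≤ c) (hbc : b + c < 30)
    (o : Occ a b c i j) : False := by
  have h1 : a + 2 * b + c < 30 ∨ (3 * a < a + 2 * b + c ∧ 3 * c < a + 2 * b + c) := by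
    by_cases hP : a + 2 * b + c < 30
    · exact Or.inl hP
    · exact Or.inr ⟨rep _ i a (by omega) o.A1, rep _ j c (by omega) o.C1⟩
  have h2 : a + b < 30 ∨ 3 * b < a + b := by
    by_cases hP : a + b < 30
    · exact Or.inl hP
    · exact Or.inr (rep _ (j + c) b (by omega) o.B3)
  have := chkAll_true
  unfold chkAll at this
  rw [List.all_eq_true] at this
  have := this (b - 1) (by simp; omega)
  rw [List.all_eq_true] at this
  have := this (c - 1) (by simp; omega)
  rw [Nat.sub_add_cancel hb, Nat.sub_add_cancel hc, Bool.or_eq_true] at this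
  rcases this with h | this
  · have hb := full_spec _ ((i + a) % 180) (by simpa using h) (by omega)
    obtain ⟨k, hk, h⟩ := smear_xb _ _ (i + a) _ hb (by omega) (i + a + (b + c)) (by omega)
    exact h (o.B1 k hk)
  rw [List.all_eq_true] at this
  have := this (a - 1) (by simp; omega)
  rw [Nat.sub_add_cancel ha, Bool.or_eq_true] at this
  rcases this with h | h
  · have : admissible a b c = true := by
      unfold admissible
      simp only [Bool.and_eq_true, Bool.or_eq_true, Nat.blt_eq]
      exact ⟨h1, h2⟩
    rw [this] at h
    exact absurd h (by simp)
  · exact chkSize_spec a b c i j h o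

theorem no_occ (a b c i j : ℕ) (ha : 1 ≤ a) (hb : 1 ≤ b) (hc : 1 ≤ c) (o : Occ a b c i j) :
    False := by
  by_cases h1 : b + c < 30
  · exact no_occ_small a b c i j ha hb hc h1 o
  by_cases h2 : a + b < 30
  · exact no_occ_small c b a j i hc hb ha (by omega) o.symm
  have e1 := rep _ i a (by omega) o.A1
  have e2 := rep _ j c (by omega) o.C1
  have e3 := rep _ (i + a) b (by omega) o.B1
  have e4 := rep _ (j + c) b (by omega) o.B3
  omega

/-- The word over `Fin 2`. -/
def x (i : ℕ) : Fin 2 := if xb i then 1 else 0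

theorem xb_of_x {i j : ℕ} (h : x i = x j) : xb i = xb j := by
  revert h
  unfold x
  cases xb i <;> cases xb j <;> simp

end ToeplitzAvoid

theorem factor_sub {α : Type*} {u l w r : List α} {x : ℕ → α} {i : ℕ}
    (h : u = (List.range u.length).map fun j => x (i + j)) (hu : u = l ++ w ++ r) (k : ℕ)
    (hk : k < w.length) : some (x (i + l.length + k)) = w[k]? := by
  have h1 : u[l.length + k]? = w[k]? := by
    rw [hu, List.append_assoc, List.getElem?_append_right (by omega),
      List.getElem?_append_left (by omega)]
    congr 1
    omega
  have hl : l.length + k < u.length := by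
    rw [hu]; simp; omega
  rw [← h1, h, List.getElem?_map, List.getElem?_range (by simpa using hl)]
  simp [Nat.add_assoc]

/-- There exists an infinite binary word avoiding the formula `ABCBA.CBABC`. -/
theorem stmt_9 :
    ∃ x : ℕ → Fin 2,
      ¬ ∃ hA hB hC : List (Fin 2),
          hA ≠ [] ∧ hB ≠ [] ∧ hC ≠ [] ∧
          IsFactorOfInf (hA ++ hB ++ hC ++ hB ++ hA) x ∧
          IsFactorOfInf (hC ++ hB ++ hA ++ hB ++ hC) x := by
  refine ⟨ToeplitzAvoid.x, ?_⟩
  rintro ⟨A, B, C, hA, hB, hC, ⟨i, hi⟩, ⟨j, hj⟩⟩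
  have a1 := factor_sub (l := []) (w := A) (r := B ++ C ++ B ++ A) hi (by simp)
  have a2 := factor_sub (l := A) (w := B) (r := C ++ B ++ A) hi (by simp)
  have a3 := factor_sub (l := A ++ B) (w := C) (r := B ++ A) hi (by simp)
  have a4 := factor_sub (l := A ++ B ++ C) (w := B) (r := A) hi (by simp)
  have a5 := factor_sub (l := A ++ B ++ C ++ B) (w := A) (r := []) hi (by simp)
  have b1 := factor_sub (l := []) (w := C) (r := B ++ A ++ B ++ C) hj (by simp)
  have b2 := factor_sub (l := C) (w := B) (r := A ++ B ++ C) hj (by simp)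
  have b3 := factor_sub (l := C ++ B) (w := A) (r := B ++ C) hj (by simp)
  have b4 := factor_sub (l := C ++ B ++ A) (w := B) (r := C) hj (by simp)
  have b5 := factor_sub (l := C ++ B ++ A ++ B) (w := C) (r := []) hj (by simp)
  have eqv : ∀ {p r s t : ℕ} {y : Option (Fin 2)}, some (ToeplitzAvoid.x p) = y →
      some (ToeplitzAvoid.x r) = y → p = s → r = t →
      ToeplitzAvoid.xb s = ToeplitzAvoid.xb t := by
    intro p r s t y h1 h2 h3 h4
    subst h3 h4
    rw [← h2] at h1
    exact ToeplitzAvoid.xb_of_x (Option.some.inj h1)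
  simp only [List.length_append, List.length_nil] at a1 a2 a3 a4 a5 b1 b2 b3 b4 b5
  refine ToeplitzAvoid.no_occ A.length B.length C.length i j (List.length_pos_iff.2 hA)
    (List.length_pos_iff.2 hB) (List.length_pos_iff.2 hC) ⟨?_, ?_, ?_, ?_, ?_, ?_, ?_⟩
  · exact fun k hk => eqv (a1 k hk) (a5 k hk) (by omega) (by omega)
  · exact fun k hk => eqv (a1 k hk) (b3 k hk) (by omega) (by omega)
  · exact fun k hk => eqv (a2 k hk) (a4 k hk) (by omega) (by omega)
  · exact fun k hk => eqv (a2 k hk) (b2 k hk) (by omega) (by omega)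
  · exact fun k hk => eqv (b2 k hk) (b4 k hk) (by omega) (by omega)
  · exact fun k hk => eqv (b1 k hk) (b5 k hk) (by omega) (by omega)
  · exact fun k hk => eqv (a3 k hk) (b1 k hk) (by omega) (by omega)
end

section
/- The number of binary words of length n avoiding the formula ABCBA.CBABC grows exponentially: there exist a real constant c > 1 and N such that for every n ≥ N, the number of words of length n over {0,1} containing no occurrence of ABCBA.CBABC is at least c^n. -/
/-- The finite binary word `w` avoids the formula `ABCBA.CBABC`. -/
def AvoidsABCBA (w : List (Fin 2)) : Prop :=
  ¬ ∃ hA hB hC : List (Fin 2),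
      hA ≠ [] ∧ hB ≠ [] ∧ hC ≠ [] ∧
      (hA ++ hB ++ hC ++ hB ++ hA) <:+: w ∧
      (hC ++ hB ++ hA ++ hB ++ hC) <:+: w

/-- Forced evaluation of a natural number before it is passed on. -/
noncomputable def force {α : Type} (n : ℕ) (f : ℕ → α) : α :=
  Nat.rec (f 0) (fun k _ => f (Nat.succ k)) n

theorem force_eq {α : Type} (n : ℕ) (f : ℕ → α) : force n f = f n := by
  cases n <;> rfl

/-- `f k` holds for all `k < n`. -/
noncomputable def allBelow (n : ℕ) (f : ℕ → Bool) : Bool :=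
  Nat.rec true (fun k ih => and (f k) ih) n

theorem allBelow_spec {n : ℕ} {f : ℕ → Bool} (h : allBelow n f = true) :
    ∀ k, k < n → f k = true := by
  induction n with
  | zero => intro k hk; omega
  | succ n ih =>
    have h' : (f n && allBelow n f) = true := h
    rw [Bool.and_eq_true] at h'
    intro k hk
    rcases Nat.lt_succ_iff_lt_or_eq.mp hk with h1 | h1
    · exact ih h'.2 k h1
    · rw [h1]; exact h'.1

/-- The eight blocks of length 240; bit `r` of a block is its `r`-th letter. -/
def blockList : List ℕ :=
  [830757945518094348854244260466744314712072089521086492251996328727687528,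
   830760262439942267398563513339768887794691925247750945776710400339095912,
   830757945666481203310111165885231433151060593674004833129223477761028456,
   830759957282945693989067502548646333443224646467094681741447446809293160,
   830758018394707235207408810577679138289464889399859307318066968943407464,
   830758760223413659084583743097617245749986312570998468267188218315944296,
   830758875433555979796345339069658344341481262872379010331881302392058216,
   830757945569526033922870576107707446954003916279816938351331248881414504]

def W (x : Fin 8) : ℕ := blockList.getD x.val 0

/-- An Eulerian tour through all ordered pairs of distinct letters. -/
def tour : List (Fin 8) :=
  [0, 1, 0, 2, 0, 3, 0, 4, 0, 5, 0, 6, 0, 7, 1, 2, 1, 3, 1, 4, 1, 5, 1, 6, 1, 7, 2, 3, 2, 4,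
   2, 5, 2, 6, 2, 7, 3, 4, 3, 5, 3, 6, 3, 7, 4, 5, 4, 6, 4, 7, 5, 6, 5, 7, 6, 7, 0]

/-- The concatenation of blocks, as a number. -/
def zn : List (Fin 8) → ℕ
  | [] => 0
  | x :: l => Nat.lor (W x) (Nat.shiftLeft (zn l) 240)

/-- Bit `i` of `runs f e k` is set if bits `i, ..., i+k-1` of `e` are. -/
noncomputable def runs : ℕ → ℕ → ℕ → ℕ
  | 0, e, _ => e
  | f + 1, e, k => cond (Nat.ble k 1) e
      (force (Nat.div k 2) fun h => force (Nat.sub k h) fun k' =>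
        force (runs f e k') fun r => Nat.land r (Nat.shiftRight r h))

/-- Bit `i` is set iff `i + p < L` and bits `i`, `i + p` of `Z` agree. -/
noncomputable def eqmL (L Z p : ℕ) : ℕ :=
  Nat.mod (Nat.xor (Nat.xor (Nat.shiftRight Z p) Z) (Nat.sub (Nat.pow 2 L) 1))
    (Nat.pow 2 (Nat.sub L p))

noncomputable def eqm (Z p : ℕ) : ℕ := eqmL 13680 Z p

noncomputable def thr (p : ℕ) : ℕ :=
  cond (Nat.ble 60 p) (cond (Nat.ble 180 p) 60 (Nat.div (Nat.add p 2) 3)) 60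

/-- Periods in the `j`-th interval of length 1368. -/
noncomputable def check1 (j : ℕ) : Bool :=
  force (zn tour) fun Z => allBelow 1368 fun k => force (Nat.add (Nat.mul 1368 j) k) fun p =>
    cond (Nat.beq (Nat.mod p 240) 0) true
      (force (thr p) fun k => Nat.beq (runs 7 (eqm Z p) k) 0)

noncomputable def check2 (x y : Fin 8) : Bool :=
  Nat.beq (runs 7 (Nat.xor (Nat.xor (W x) (W y)) (Nat.sub (Nat.pow 2 240) 1)) 40) 0

/-- No position of `R` and position of `R'` carry equal letters at all the listed offsets. -/
noncomputable def split (Z : ℕ) : List (ℕ × ℕ) → ℕ → ℕ → Bool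
  | [], R, R' => or (Nat.beq R 0) (Nat.beq R' 0)
  | o :: l, R, R' =>
    cond (Nat.beq R 0) true (cond (Nat.beq R' 0) true
      (force (Nat.land R (Nat.shiftRight Z o.1)) fun R1 =>
        force (Nat.land R' (Nat.shiftRight Z o.2)) fun R1' =>
          and (split Z l R1 R1')
            (force (Nat.xor R R1) fun R0 => force (Nat.xor R' R1') fun R0' => split Z l R0 R0')))

/-- `offs n s t` is the list of the pairs `(s + x, t + x)` for `x < n`. -/
def offs : ℕ → ℕ → ℕ → List (ℕ × ℕ)
  | 0, _, _ => []
  | n + 1, s, t => (s + n, t + n) :: offs n s t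

noncomputable def triple (Z e r a b c : ℕ) : Bool :=
  force (Nat.land r (Nat.shiftRight (runs 7 (eqm Z (Nat.add a b)) b) c)) fun R =>
    cond (Nat.beq R 0) true
      (force (Nat.land (runs 7 e a) (Nat.shiftRight (runs 7 (eqm Z (Nat.add b c)) b) a)) fun R' =>
        split Z (offs a (c + b) 0 ++ (offs b c a ++ offs c 0 (a + b))) R R')

/-- Periods `P` congruent to `j` modulo 4. -/
noncomputable def check3 (j : ℕ) : Bool :=
  force (zn tour) fun Z => allBelow 30 fun i => force (Nat.add (Nat.mul 4 i) j) fun P => force (eqm Z P) fun e =>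
    allBelow P fun c => cond (Nat.beq c 0) true
      (force (runs 7 e c) fun r => cond (Nat.beq r 0) true
        (allBelow P fun b => cond (Nat.beq b 0) true
          (cond (Nat.ble P (Nat.add c (Nat.mul 2 b))) true
            (force (Nat.sub P (Nat.add c (Nat.mul 2 b))) fun a =>
              cond (Nat.ble a c) (triple Z e r a b c) true))))

theorem check1_0 : check1 0 = true := by decide +kernel
theorem check1_1 : check1 1 = true := by decide +kernel
theorem check1_2 : check1 2 = true := by decide +kernel
theorem check1_3 : check1 3 = true := by decide +kernel
theorem check1_4 : check1 4 = true := by decide +kernel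
theorem check1_5 : check1 5 = true := by decide +kernel
theorem check1_6 : check1 6 = true := by decide +kernel
theorem check1_7 : check1 7 = true := by decide +kernel
theorem check1_8 : check1 8 = true := by decide +kernel
theorem check1_9 : check1 9 = true := by decide +kernel

theorem check2_true : ∀ x y : Fin 8, x ≠ y → check2 x y = true := by decide +kernel

theorem check3_0 : check3 0 = true := by decide +kernel
theorem check3_1 : check3 1 = true := by decide +kernel
theorem check3_2 : check3 2 = true := by decide +kernel
theorem check3_3 : check3 3 = true := by decide +kernel

/-! ### Soundness of the bit computations -/

theorem tb_land (a b i : ℕ) : (Nat.land a b).testBit i = (a.testBit i && b.testBit i) :=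
  Nat.testBit_and a b i

theorem tb_xor (a b i : ℕ) : (Nat.xor a b).testBit i = ((a.testBit i) ^^ (b.testBit i)) :=
  Nat.testBit_xor a b i

theorem tb_lor (a b i : ℕ) : (Nat.lor a b).testBit i = (a.testBit i || b.testBit i) :=
  Nat.testBit_or a b i

theorem tb_shr (a b i : ℕ) : (Nat.shiftRight a b).testBit i = a.testBit (b + i) :=
  Nat.testBit_shiftRight a

theorem tb_shl (a b i : ℕ) :
    (Nat.shiftLeft a b).testBit i = (decide (i ≥ b) && a.testBit (i - b)) :=
  Nat.testBit_shiftLeft a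

theorem ne_zero_of_tb {n i : ℕ} (h : n.testBit i = true) : n ≠ 0 := by
  rintro rfl
  simp at h

theorem tb_beq_zero {n i : ℕ} (h : n.testBit i = true) : Nat.beq n 0 = false := by
  have := ne_zero_of_tb h
  cases n with
  | zero => exact absurd rfl this
  | succ n => rfl

theorem runs_spec (f : ℕ) : ∀ (e k i : ℕ), 1 ≤ k → (∀ j, j < k → e.testBit (i + j) = true) →
    (runs f e k).testBit i = true := by
  induction f with
  | zero => intro e k i hk h; exact h 0 hk
  | succ f ih =>
    intro e k i hk h
    rw [runs]
    by_cases h1 : k ≤ 1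
    · rw [Nat.ble_eq_true_of_le h1]
      exact h 0 hk
    · have hb : Nat.ble k 1 = false := by
        rw [← Bool.not_eq_true, Nat.ble_eq]; exact h1
      rw [hb]
      simp only [force_eq, cond_false, tb_land, tb_shr, Bool.and_eq_true]
      have hd : Nat.div k 2 = k / 2 := rfl
      have hs : Nat.sub k (k / 2) = k - k / 2 := rfl
      rw [hd, hs]
      constructor
      · exact ih e _ i (by omega) fun j hj => h j (by omega)
      · refine ih e _ _ (by omega) fun j hj => ?_
        have := h (k / 2 + j) (by omega)
        rw [← this]; congr 1; omega

theorem eqm_aux (L Z p i : ℕ) (h : i + p < L) (hz : Z.testBit i = Z.testBit (i + p)) :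
    (eqmL L Z p).testBit i = true := by
  change ((Nat.xor (Nat.xor (Nat.shiftRight Z p) Z) (2 ^ L - 1)) %
    (2 ^ (L - p))).testBit i = true
  rw [Nat.testBit_mod_two_pow, tb_xor, tb_xor, tb_shr, Nat.testBit_two_pow_sub_one, hz,
    Nat.add_comm p i]
  have h1 : i < L - p := by omega
  have h2 : i < L := by omega
  simp [h1, h2]

theorem eqm_spec (Z p i : ℕ) (h : i + p < 13680) (hz : Z.testBit i = Z.testBit (i + p)) :
    (eqm Z p).testBit i = true := by
  exact eqm_aux 13680 Z p i h hz

theorem W_lt : ∀ x : Fin 8, W x < 2 ^ 240 := by decide +kernel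

theorem zn_spec (l : List (Fin 8)) : ∀ (k : ℕ) (hk : k < l.length) (r : ℕ), r < 240 →
    (zn l).testBit (240 * k + r) = (W l[k]).testBit r := by
  induction l with
  | nil => intro k hk; simp at hk
  | cons x l ih =>
    intro k hk r hr
    rw [zn, tb_lor, tb_shl]
    cases k with
    | zero =>
      have : ¬ (240 * 0 + r ≥ 240) := by omega
      simp [hr]
    | succ k =>
      have h1 : (W x).testBit (240 * (k + 1) + r) = false := by
        apply Nat.testBit_lt_two_pow
        refine lt_of_lt_of_le (W_lt x) (Nat.pow_le_pow_right (by norm_num) (by omega))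
      have h2 : 240 * (k + 1) + r - 240 = 240 * k + r := by omega
      have h3 : 240 * (k + 1) + r ≥ 240 := by omega
      rw [h1, h2, ih k (by simpa using hk) r hr]
      simp [h3]

theorem split_spec (Z : ℕ) (l : List (ℕ × ℕ)) : ∀ (R R' i j : ℕ), split Z l R R' = true →
    R.testBit i = true → R'.testBit j = true →
    (∀ o ∈ l, Z.testBit (i + o.1) = Z.testBit (j + o.2)) → False := by
  induction l with
  | nil =>
    intro R R' i j h hR hR' _
    rw [split, tb_beq_zero hR, tb_beq_zero hR'] at h
    simp at h
  | cons o l ih =>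
    intro R R' i j h hR hR' ho
    rw [split, tb_beq_zero hR, tb_beq_zero hR'] at h
    simp only [force_eq, cond_false, Bool.and_eq_true] at h
    have h0 := ho o (by simp)
    have hl : ∀ o ∈ l, Z.testBit (i + o.1) = Z.testBit (j + o.2) :=
      fun o' ho' => ho o' (by simp [ho'])
    rw [Nat.add_comm i, Nat.add_comm j] at h0
    cases hb : Z.testBit (o.1 + i) with
    | true =>
      refine ih _ _ i j h.1 ?_ ?_ hl
      · rw [tb_land, tb_shr, hR, hb]; rfl
      · rw [tb_land, tb_shr, hR', ← h0, hb]; rfl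
    | false =>
      refine ih _ _ i j h.2 ?_ ?_ hl
      · rw [tb_xor, tb_land, tb_shr, hR, hb]; rfl
      · rw [tb_xor, tb_land, tb_shr, hR', ← h0, hb]; rfl

theorem mem_offs (n s t : ℕ) (o : ℕ × ℕ) (h : o ∈ offs n s t) :
    ∃ x, x < n ∧ o = (s + x, t + x) := by
  induction n with
  | zero => simp [offs] at h
  | succ n ih =>
    rw [offs, List.mem_cons] at h
    rcases h with h | h
    · exact ⟨n, by omega, h⟩
    · obtain ⟨x, hx, e⟩ := ih h
      exact ⟨x, by omega, e⟩

/-- Letter `i` of the long word. -/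
def zb (i : ℕ) : Bool := (zn tour).testBit i

theorem check1_all (j : ℕ) (hj : j < 10) : check1 j = true := by
  interval_cases j
  exacts [check1_0, check1_1, check1_2, check1_3, check1_4, check1_5, check1_6, check1_7,
    check1_8, check1_9]

theorem check3_all (j : ℕ) (hj : j < 4) : check3 j = true := by
  interval_cases j
  exacts [check3_0, check3_1, check3_2, check3_3]

theorem thr_eq (p : ℕ) : thr p = if 60 ≤ p then (if 180 ≤ p then 60 else (p + 2) / 3) else 60 := by
  unfold thr
  by_cases h1 : 60 ≤ p
  · rw [Nat.ble_eq_true_of_le h1]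
    by_cases h2 : 180 ≤ p
    · rw [Nat.ble_eq_true_of_le h2]; simp [h1, h2]
    · have hb : Nat.ble 180 p = false := by
        rw [← Bool.not_eq_true, Nat.ble_eq]; exact h2
      rw [hb]; simp only [h1, h2, if_true, if_false]; rfl
  · have hb : Nat.ble 60 p = false := by
      rw [← Bool.not_eq_true, Nat.ble_eq]; exact h1
    rw [hb]; simp [h1]

/-- The long word has no long repeats at shifts not divisible by 240. -/
theorem zrep (p i : ℕ) (hp : p % 240 ≠ 0) (hi : i + p + thr p ≤ 13680)
    (h : ∀ x, x < thr p → zb (i + x) = zb (i + p + x)) : False := by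
  have ht : 1 ≤ thr p := by
    rw [thr_eq]; split_ifs <;> omega
  have h1 := check1_all (p / 1368) (by omega)
  rw [check1, force_eq] at h1
  have h2 := allBelow_spec h1 (p % 1368) (by omega)
  have hpp : Nat.add (Nat.mul 1368 (p / 1368)) (p % 1368) = p := Nat.div_add_mod p 1368
  rw [force_eq, hpp, force_eq] at h2
  have h3 : Nat.beq (Nat.mod p 240) 0 = false := by
    rw [← Bool.not_eq_true, Nat.beq_eq]; exact hp
  rw [h3, cond_false] at h2
  have h4 : (runs 7 (eqm (zn tour) p) (thr p)).testBit i = true := by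
    refine runs_spec 7 _ _ i ht fun j hj => eqm_spec _ _ _ (by omega) ?_
    have := h j hj
    rw [zb, zb] at this
    rw [this]; congr 1; omega
  rw [tb_beq_zero h4] at h2
  exact absurd h2 (by simp)

theorem blocks_ne (x y : Fin 8) (o : ℕ) (ho : o + 40 ≤ 240)
    (h : ∀ j, j < 40 → (W x).testBit (o + j) = (W y).testBit (o + j)) : x = y := by
  by_contra hne
  have h1 := check2_true x y hne
  rw [check2] at h1
  have h4 : (runs 7 (Nat.xor (Nat.xor (W x) (W y)) (2 ^ 240 - 1)) 40).testBit o = true := by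
    refine runs_spec 7 _ _ o (by norm_num) fun j hj => ?_
    rw [tb_xor, tb_xor, Nat.testBit_two_pow_sub_one, h j hj]
    have : o + j < 240 := by omega
    simp [this]
  have h5 : Nat.beq (runs 7 (Nat.xor (Nat.xor (W x) (W y)) (2 ^ 240 - 1)) 40) 0 = true := h1
  rw [tb_beq_zero h4] at h5
  exact absurd h5 (by simp)

/-- The long word has no short occurrence of the formula. -/
theorem zformula (a b c i j : ℕ) (ha : 1 ≤ a) (hb : 1 ≤ b) (hac : a ≤ c)
    (hP : a + 2 * b + c < 120) (hi : i + (a + 2 * b + 2 * c) ≤ 13680)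
    (hj : j + (2 * a + 2 * b + c) ≤ 13680)
    (i1 : ∀ x, x < c → zb (i + x) = zb (i + (a + 2 * b + c) + x))
    (i2 : ∀ x, x < b → zb (i + c + x) = zb (i + c + (a + b) + x))
    (j1 : ∀ x, x < a → zb (j + x) = zb (j + (a + 2 * b + c) + x))
    (j2 : ∀ x, x < b → zb (j + a + x) = zb (j + a + (b + c) + x))
    (k1 : ∀ x, x < c → zb (i + x) = zb (j + (a + b) + x))
    (k2 : ∀ x, x < b → zb (i + c + x) = zb (j + a + x))
    (k3 : ∀ x, x < a → zb (i + (c + b) + x) = zb (j + x)) : False := by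
  set P := a + 2 * b + c with hPd
  have h1 := check3_all (P % 4) (by omega)
  rw [check3, force_eq] at h1
  have h2 := allBelow_spec h1 (P / 4) (by omega)
  have hpp : Nat.add (Nat.mul 4 (P / 4)) (P % 4) = P := Nat.div_add_mod P 4
  rw [force_eq, hpp, force_eq] at h2
  have h3 := allBelow_spec h2 c (by omega)
  have hc0 : Nat.beq c 0 = false := by
    rw [← Bool.not_eq_true, Nat.beq_eq]; omega
  have hb0 : Nat.beq b 0 = false := by
    rw [← Bool.not_eq_true, Nat.beq_eq]; omega
  have r1 : (runs 7 (eqm (zn tour) P) c).testBit i = true := by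
    refine runs_spec 7 _ _ i (by omega) fun x hx => eqm_spec _ _ _ (by omega) ?_
    have := i1 x hx
    rw [zb, zb] at this
    rw [this]; congr 1; omega
  rw [hc0, cond_false, force_eq, tb_beq_zero r1, cond_false] at h3
  have h4 := allBelow_spec h3 b (by omega)
  have hle : Nat.ble P (Nat.add c (Nat.mul 2 b)) = false := by
    rw [← Bool.not_eq_true, Nat.ble_eq]
    change ¬ P ≤ c + 2 * b
    omega
  have hsub : Nat.sub P (Nat.add c (Nat.mul 2 b)) = a := by
    change P - (c + 2 * b) = a
    omega
  rw [hb0, cond_false, hle, cond_false, force_eq, hsub, Nat.ble_eq_true_of_le hac, cond_true,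
    triple, force_eq] at h4
  have r2 : (runs 7 (eqm (zn tour) (Nat.add a b)) b).testBit (c + i) = true := by
    refine runs_spec 7 _ _ _ (by omega) fun x hx => eqm_spec _ _ _ ?_ ?_
    · change c + i + x + (a + b) < _
      omega
    · have := i2 x hx
      rw [zb, zb] at this
      change _ = (zn tour).testBit (c + i + x + (a + b))
      rw [show c + i + x = i + c + x by omega, this]; congr 1; omega
  have r3 : (runs 7 (eqm (zn tour) P) a).testBit j = true := by
    refine runs_spec 7 _ _ _ (by omega) fun x hx => eqm_spec _ _ _ (by omega) ?_
    have := j1 x hx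
    rw [zb, zb] at this
    rw [this]; congr 1; omega
  have r4 : (runs 7 (eqm (zn tour) (Nat.add b c)) b).testBit (a + j) = true := by
    refine runs_spec 7 _ _ _ (by omega) fun x hx => eqm_spec _ _ _ ?_ ?_
    · change a + j + x + (b + c) < _
      omega
    · have := j2 x hx
      rw [zb, zb] at this
      change _ = (zn tour).testBit (a + j + x + (b + c))
      rw [show a + j + x = j + a + x by omega, this]; congr 1; omega
  have R : (Nat.land (runs 7 (eqm (zn tour) P) c)
      (Nat.shiftRight (runs 7 (eqm (zn tour) (Nat.add a b)) b) c)).testBit i = true := by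
    rw [tb_land, tb_shr, r1, r2]; rfl
  have R' : (Nat.land (runs 7 (eqm (zn tour) P) a)
      (Nat.shiftRight (runs 7 (eqm (zn tour) (Nat.add b c)) b) a)).testBit j = true := by
    rw [tb_land, tb_shr, r3, r4]; rfl
  rw [tb_beq_zero R, cond_false, force_eq] at h4
  refine split_spec _ _ _ _ i j h4 R R' fun o ho => ?_
  rw [List.mem_append, List.mem_append] at ho
  rcases ho with ho | ho | ho
  · obtain ⟨x, hx, rfl⟩ := mem_offs _ _ _ _ ho
    have := k3 x hx
    rw [zb, zb] at this
    simp only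
    rw [← Nat.add_assoc, this]; congr 1; omega
  · obtain ⟨x, hx, rfl⟩ := mem_offs _ _ _ _ ho
    have := k2 x hx
    rw [zb, zb] at this
    simp only
    rw [← Nat.add_assoc, this]; congr 1; omega
  · obtain ⟨x, hx, rfl⟩ := mem_offs _ _ _ _ ho
    have := k1 x hx
    rw [zb, zb] at this
    simp only
    rw [show i + (0 + x) = i + x by omega, this]; congr 1; omega

/-! ### From words over eight letters to binary words -/

/-- The binary sequence coded by a word over eight letters. -/
def yb (u : List (Fin 8)) (i : ℕ) : Bool := (W (u.getD (i / 240) 0)).testBit (i % 240)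

/-- No repetition with period `P` and excess at least `P / 3`. -/
def Good (l : List (Fin 8)) : Prop :=
  ∀ k P E, 1 ≤ P → P ≤ 3 * E → k + P + E ≤ l.length →
    ¬ ∀ x, x < E → l.getD (k + x) 0 = l.getD (k + P + x) 0

theorem tour_pairs : ∀ x y : Fin 8, x ≠ y →
    ∃ k : Fin 56, tour.getD k.val 0 = x ∧ tour.getD (k.val + 1) 0 = y := by decide +kernel

theorem zb_eq (k r : ℕ) (hk : k < 57) (hr : r < 240) :
    zb (240 * k + r) = (W (tour.getD k 0)).testBit r := by
  have hl : tour.length = 57 := rfl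
  have h := zn_spec tour k (by omega) r hr
  rw [zb, h, List.getD_eq_getElem _ _ (by omega)]

theorem yb_eq (u : List (Fin 8)) (k r : ℕ) (hr : r < 240) :
    yb u (240 * k + r) = (W (u.getD k 0)).testBit r := by
  rw [yb, show (240 * k + r) / 240 = k by omega, show (240 * k + r) % 240 = r by omega]

theorem window (u : List (Fin 8)) (hu : Good u) (i len : ℕ) (h1 : 1 ≤ len) (h2 : len ≤ 240)
    (hi : i + len ≤ 240 * u.length) :
    ∃ i', i' % 240 = i % 240 ∧ i' + len ≤ 13680 ∧ ∀ x, x < len → yb u (i + x) = zb (i' + x) := by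
  have key : ∃ k', k' < 56 ∧ tour.getD k' 0 = u.getD (i / 240) 0 ∧
      (i / 240 + 1 < u.length → tour.getD (k' + 1) 0 = u.getD (i / 240 + 1) 0) := by
    by_cases hk : i / 240 + 1 < u.length
    · have hne : u.getD (i / 240) 0 ≠ u.getD (i / 240 + 1) 0 := by
        intro he
        refine hu (i / 240) 1 1 le_rfl (by norm_num) (by omega) fun x hx => ?_
        have : x = 0 := by omega
        subst this
        exact he
      obtain ⟨k', e1, e2⟩ := tour_pairs _ _ hne
      exact ⟨k', k'.2, e1, fun _ => e2⟩
    · obtain ⟨y, hy⟩ : ∃ y : Fin 8, u.getD (i / 240) 0 ≠ y := by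
        by_cases h0 : u.getD (i / 240) 0 = 0
        · exact ⟨1, by rw [h0]; decide⟩
        · exact ⟨0, h0⟩
      obtain ⟨k', e1, e2⟩ := tour_pairs _ _ hy
      exact ⟨k', k'.2, e1, fun h => absurd h hk⟩
  obtain ⟨k', hk', e1, e2⟩ := key
  refine ⟨240 * k' + i % 240, by omega, by omega, fun x hx => ?_⟩
  by_cases hx2 : i % 240 + x < 240
  · rw [show i + x = 240 * (i / 240) + (i % 240 + x) by omega, yb_eq _ _ _ hx2, Nat.add_assoc,
      zb_eq _ _ (by omega) hx2, e1]
  · have hx3 : i % 240 + x - 240 < 240 := by omega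
    rw [show i + x = 240 * (i / 240 + 1) + (i % 240 + x - 240) by omega, yb_eq _ _ _ hx3,
      show 240 * k' + i % 240 + x = 240 * (k' + 1) + (i % 240 + x - 240) by omega,
      zb_eq _ _ (by omega) hx3, e2 (by omega)]

/-- Repetitions of period at least 60 and excess at least a third of the period are excluded. -/
theorem rep (u : List (Fin 8)) (hu : Good u) (i p l : ℕ) (hp : 60 ≤ p) (hl : p ≤ 3 * l)
    (hi : i + p + l ≤ 240 * u.length)
    (h : ∀ x, x < l → yb u (i + x) = yb u (i + p + x)) : False := by
  by_cases hd : p % 240 = 0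
  · obtain ⟨P, rfl⟩ : ∃ P, p = 240 * P := ⟨p / 240, by omega⟩
    have hP : 1 ≤ P := by omega
    -- the blocks meeting the repeated factor in at least 40 letters
    set k1 := (i + 39) / 240 with hk1
    set K2 := (i + l + 200) / 240 with hK2
    have hE : P ≤ 3 * (K2 - k1) := by omega
    have hK : k1 ≤ K2 := by omega
    refine hu k1 P (K2 - k1) hP hE (by omega) fun x hx => ?_
    have hk := Nat.lt_sub_iff_add_lt.mp hx
    set k := k1 + x with hkd
    refine blocks_ne _ _ (i - 240 * k) (by omega) fun j hj => ?_
    have hr : i - 240 * k + j < 240 := by omega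
    rw [← yb_eq u k _ hr, ← yb_eq u (k1 + P + x) _ hr]
    have := h (240 * k + (i - 240 * k + j) - i) (by omega)
    rw [show i + (240 * k + (i - 240 * k + j) - i) = 240 * k + (i - 240 * k + j) by omega] at this
    rw [this]
    congr 1
    omega
  · by_cases h3 : p < 180
    · have ht : thr p = (p + 2) / 3 := by
        rw [thr_eq, if_pos hp, if_neg (by omega)]
      obtain ⟨i', -, e2, e3⟩ := window u hu i (p + thr p) (by omega) (by omega) (by omega)
      refine zrep p i' hd (by omega) fun x hx => ?_
      rw [← e3 x (by omega), Nat.add_assoc, ← e3 (p + x) (by omega), h x (by omega),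
        Nat.add_assoc]
    · obtain ⟨i', e1, e2, e3⟩ := window u hu i 60 (by omega) (by omega) (by omega)
      obtain ⟨j', f1, f2, f3⟩ := window u hu (i + p) 60 (by omega) (by omega) (by omega)
      have hij : ∀ x, x < 60 → zb (i' + x) = zb (j' + x) := fun x hx => by
        rw [← e3 x hx, ← f3 x hx, h x (by omega)]
      have hthr : ∀ r, thr r ≤ 60 := by
        intro r
        rw [thr_eq]
        split_ifs <;> omega
      rcases le_total i' j' with hle | hle
      · have := hthr (j' - i')
        refine zrep (j' - i') i' (by omega) (by omega) fun x hx => ?_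
        rw [hij x (by omega), show i' + (j' - i') + x = j' + x by omega]
      · have := hthr (i' - j')
        refine zrep (i' - j') j' (by omega) (by omega) fun x hx => ?_
        rw [← hij x (by omega), show j' + (i' - j') + x = i' + x by omega]

/-- The coded binary word contains no occurrence of the formula. -/
theorem yformula_le (u : List (Fin 8)) (hu : Good u) (a b c i j : ℕ) (ha : 1 ≤ a) (hb : 1 ≤ b)
    (hac : a ≤ c) (hi : i + (a + 2 * b + 2 * c) ≤ 240 * u.length)
    (hj : j + (2 * a + 2 * b + c) ≤ 240 * u.length)
    (i1 : ∀ x, x < c → yb u (i + x) = yb u (i + (a + 2 * b + c) + x))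
    (i2 : ∀ x, x < b → yb u (i + c + x) = yb u (i + c + (a + b) + x))
    (j1 : ∀ x, x < a → yb u (j + x) = yb u (j + (a + 2 * b + c) + x))
    (j2 : ∀ x, x < b → yb u (j + a + x) = yb u (j + a + (b + c) + x))
    (k1 : ∀ x, x < c → yb u (i + x) = yb u (j + (a + b) + x))
    (k2 : ∀ x, x < b → yb u (i + c + x) = yb u (j + a + x))
    (k3 : ∀ x, x < a → yb u (i + (c + b) + x) = yb u (j + x)) : False := by
  have q1 : ¬ (60 ≤ a + 2 * b + c ∧ a + 2 * b + c ≤ 3 * c) := fun hh =>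
    rep u hu i _ c hh.1 hh.2 (by omega) i1
  have q2 : ¬ (60 ≤ a + b ∧ a + b ≤ 3 * b) := fun hh =>
    rep u hu (i + c) _ b hh.1 hh.2 (by omega) i2
  have q3 : ¬ (60 ≤ b + c ∧ b + c ≤ 3 * b) := fun hh =>
    rep u hu (j + a) _ b hh.1 hh.2 (by omega) j2
  have hP : a + 2 * b + c < 120 := by omega
  obtain ⟨i', -, e2, e3⟩ := window u hu i (a + 2 * b + 2 * c) (by omega) (by omega) hi
  obtain ⟨j', -, f2, f3⟩ := window u hu j (2 * a + 2 * b + c) (by omega) (by omega) hj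
  refine zformula a b c i' j' ha hb hac hP e2 f2 ?_ ?_ ?_ ?_ ?_ ?_ ?_ <;> intro x hx
  · have := i1 x hx
    simp only [Nat.add_assoc] at this ⊢
    rwa [e3 _ (by omega), e3 _ (by omega)] at this
  · have := i2 x hx
    simp only [Nat.add_assoc] at this ⊢
    rwa [e3 _ (by omega), e3 _ (by omega)] at this
  · have := j1 x hx
    simp only [Nat.add_assoc] at this ⊢
    rwa [f3 _ (by omega), f3 _ (by omega)] at this
  · have := j2 x hx
    simp only [Nat.add_assoc] at this ⊢
    rwa [f3 _ (by omega), f3 _ (by omega)] at this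
  · have := k1 x hx
    simp only [Nat.add_assoc] at this ⊢
    rwa [e3 _ (by omega), f3 _ (by omega)] at this
  · have := k2 x hx
    simp only [Nat.add_assoc] at this ⊢
    rwa [e3 _ (by omega), f3 _ (by omega)] at this
  · have := k3 x hx
    simp only [Nat.add_assoc] at this ⊢
    rwa [e3 _ (by omega), f3 _ (by omega)] at this

/-! ### Occurrences in lists -/

/-- The list `y` stands at position `i` of `w`. -/
def At (w y : List (Fin 2)) (i : ℕ) : Prop :=
  i + y.length ≤ w.length ∧ ∀ k, k < y.length → w[i + k]? = y[k]?

theorem At.append {w y z : List (Fin 2)} {i : ℕ} (h : At w (y ++ z) i) :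
    At w y i ∧ At w z (i + y.length) := by
  obtain ⟨h1, h2⟩ := h
  rw [List.length_append] at h1 h2
  refine ⟨⟨by omega, fun k hk => ?_⟩, ⟨by omega, fun k hk => ?_⟩⟩
  · rw [h2 k (by omega), List.getElem?_append_left hk]
  · rw [Nat.add_assoc, h2 _ (by omega), List.getElem?_append_right (by omega)]
    congr 1
    omega

theorem at_of_factor {w y : List (Fin 2)} (h : y <:+: w) : ∃ i, At w y i := by
  obtain ⟨s, t, rfl⟩ := h
  refine ⟨s.length, by simp only [List.length_append]; omega, fun k hk => ?_⟩
  rw [List.append_assoc, List.getElem?_append_right (by omega), Nat.add_sub_cancel_left,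
    List.getElem?_append_left hk]

/-- The binary word of length `n` coded by `u`. -/
def code (u : List (Fin 8)) (n : ℕ) : List (Fin 2) :=
  (List.range n).map fun i => if yb u i = true then 1 else 0

theorem code_length (u : List (Fin 8)) (n : ℕ) : (code u n).length = n := by simp [code]

theorem code_get (u v : List (Fin 8)) (n i j : ℕ) (hi : i < n) (hj : j < n)
    (h : (code u n)[i]? = (code v n)[j]?) : yb u i = yb v j := by
  simp only [code, List.getElem?_map, List.getElem?_range hi, List.getElem?_range hj,
    Option.map_some, Option.some.injEq] at h
  by_cases h1 : yb u i = true <;> by_cases h2 : yb v j = true <;> simp_all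

theorem At.eq {u : List (Fin 8)} {n : ℕ} {y : List (Fin 2)} {i j : ℕ} (h1 : At (code u n) y i)
    (h2 : At (code u n) y j) : ∀ x, x < y.length → yb u (i + x) = yb u (j + x) := by
  intro x hx
  obtain ⟨h1, h1'⟩ := h1
  obtain ⟨h2, h2'⟩ := h2
  rw [code_length] at h1 h2
  exact code_get u u n _ _ (by omega) (by omega) (by rw [h1' x hx, h2' x hx])

theorem code_avoids_le (u : List (Fin 8)) (hu : Good u) (n : ℕ) (hn : n ≤ 240 * u.length)
    (A B C : List (Fin 2)) (hA : A ≠ []) (hB : B ≠ []) (hac : A.length ≤ C.length)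
    (h1 : (A ++ B ++ C ++ B ++ A) <:+: code u n) (h2 : (C ++ B ++ A ++ B ++ C) <:+: code u n) :
    False := by
  have ha := List.length_pos_iff.mpr hA
  have hb := List.length_pos_iff.mpr hB
  obtain ⟨j, hj⟩ := at_of_factor h1
  obtain ⟨i, hi⟩ := at_of_factor h2
  have lj := hj.1
  have li := hi.1
  rw [code_length] at lj li
  simp only [List.length_append] at lj li
  obtain ⟨hj, a2⟩ := hj.append
  obtain ⟨hj, b2⟩ := hj.append
  obtain ⟨hj, c1⟩ := hj.append
  obtain ⟨a1, b1⟩ := hj.append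
  obtain ⟨hi, c3⟩ := hi.append
  obtain ⟨hi, b4⟩ := hi.append
  obtain ⟨hi, a3⟩ := hi.append
  obtain ⟨c2, b3⟩ := hi.append
  simp only [List.length_append] at a2 b2 c1 c3 b4 a3
  set a := A.length
  set b := B.length
  set c := C.length
  refine yformula_le u hu a b c i j ha hb hac (by omega) (by omega) ?_ ?_ ?_ ?_ ?_ ?_ ?_
  · rw [show i + (a + 2 * b + c) = i + (c + b + a + b) by omega]; exact c2.eq c3
  · rw [show i + c + (a + b) = i + (c + b + a) by omega]; exact b3.eq b4
  · rw [show j + (a + 2 * b + c) = j + (a + b + c + b) by omega]; exact a1.eq a2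
  · rw [show j + a + (b + c) = j + (a + b + c) by omega]; exact b1.eq b2
  · exact c2.eq c1
  · exact b3.eq b1
  · exact a3.eq a1

theorem code_avoids (u : List (Fin 8)) (hu : Good u) (n : ℕ) (hn : n ≤ 240 * u.length) :
    AvoidsABCBA (code u n) := by
  rintro ⟨A, B, C, hA, hB, hC, h1, h2⟩
  rcases le_total A.length C.length with h | h
  · exact code_avoids_le u hu n hn A B C hA hB h h1 h2
  · exact code_avoids_le u hu n hn C B A hC hB h h2 h1

/-! ### Counting the words over eight letters -/

open Classical in
/-- Good words of length `n`. -/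
noncomputable def G : ℕ → Finset (List (Fin 8))
  | 0 => {[]}
  | n + 1 => (((Finset.univ : Finset (Fin 8)) ×ˢ G n).image fun p => p.1 :: p.2).filter Good

theorem Good.tail {x : Fin 8} {l : List (Fin 8)} (h : Good (x :: l)) : Good l := by
  intro k P E hP hE hk hh
  refine h (k + 1) P E hP hE (by rw [List.length_cons]; omega) fun y hy => ?_
  have := hh y hy
  rw [show k + 1 + y = (k + y) + 1 by omega, show k + 1 + P + y = (k + P + y) + 1 by omega,
    List.getD_cons_succ, List.getD_cons_succ]
  exact this

theorem mem_G (n : ℕ) : ∀ l, l ∈ G n ↔ l.length = n ∧ Good l := by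
  induction n with
  | zero =>
    intro l
    rw [G, Finset.mem_singleton, List.length_eq_zero_iff]
    constructor
    · rintro rfl
      refine ⟨rfl, fun k P E hP hE hk => ?_⟩
      simp at hk
      omega
    · exact fun h => h.1
  | succ n ih =>
    intro l
    simp only [G, Finset.mem_filter, Finset.mem_image, Finset.mem_product, Finset.mem_univ,
      true_and, Prod.exists]
    constructor
    · rintro ⟨⟨x, l', h, rfl⟩, hg⟩
      exact ⟨by rw [List.length_cons, ((ih l').1 h).1], hg⟩
    · rintro ⟨hl, hg⟩
      cases l with
      | nil => simp at hl
      | cons x l =>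
        exact ⟨⟨x, l, (ih l).2 ⟨by simpa using hl, hg.tail⟩, rfl⟩, hg⟩

theorem Good.drop {l : List (Fin 8)} (h : Good l) : ∀ k, Good (l.drop k) := by
  intro k
  induction k generalizing l with
  | zero => simpa using h
  | succ k ih =>
    cases l with
    | nil => simpa using h
    | cons x l => rw [List.drop_succ_cons]; exact ih h.tail

open Classical in
theorem card_G_step (n : ℕ) :
    8 * (G n).card ≤ (G (n + 1)).card + 3 * ∑ k ∈ Finset.range (n + 1), (G k).card := by
  set Cn := ((Finset.univ : Finset (Fin 8)) ×ˢ G n).image fun p => p.1 :: p.2 with hCn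
  have hcard : Cn.card = 8 * (G n).card := by
    rw [hCn, Finset.card_image_of_injective, Finset.card_product, Finset.card_univ,
      Fintype.card_fin]
    rintro ⟨x, l⟩ ⟨y, l'⟩ h
    simpa using h
  have hmem : ∀ l ∈ Cn, l.length = n + 1 ∧ Good l.tail := by
    intro l hl
    simp only [hCn, Finset.mem_image, Finset.mem_product, Finset.mem_univ, true_and,
      Prod.exists] at hl
    obtain ⟨x, l', h, rfl⟩ := hl
    have := (mem_G n l').1 h
    exact ⟨by rw [List.length_cons, this.1], this.2⟩
  let Bad : ℕ → ℕ → Finset (List (Fin 8)) := fun E d => Cn.filter fun l =>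
    3 * (E + 1) - d + (E + 1) ≤ n + 1 ∧
      ∀ x, x < E + 1 → l.getD x 0 = l.getD (3 * (E + 1) - d + x) 0
  have hsub : Cn ⊆ G (n + 1) ∪ (Finset.range (n + 1)).biUnion fun E =>
      (Finset.range 3).biUnion fun d => Bad E d := by
    intro l hl
    obtain ⟨hlen, hgt⟩ := hmem l hl
    rw [Finset.mem_union]
    by_cases hg : Good l
    · exact Or.inl ((mem_G _ _).2 ⟨hlen, hg⟩)
    · right
      unfold Good at hg
      push Not at hg
      obtain ⟨k, P, E, hP, hE, hk, hh⟩ := hg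
      cases k with
      | succ k =>
        exfalso
        cases l with
        | nil => simp at hlen
        | cons x l =>
          rw [List.tail_cons] at hgt
          rw [List.length_cons] at hk
          refine hgt k P E hP hE (by omega) fun y hy => ?_
          have := hh y hy
          rwa [show k + 1 + y = (k + y) + 1 by omega,
            show k + 1 + P + y = (k + P + y) + 1 by omega, List.getD_cons_succ,
            List.getD_cons_succ] at this
      | zero =>
        have hE1 : (P + 2) / 3 ≤ E := by omega
        simp only [Finset.mem_biUnion, Finset.mem_range]
        refine ⟨(P + 2) / 3 - 1, by omega, 3 * ((P + 2) / 3) - P, by omega, ?_⟩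
        have e1 : (P + 2) / 3 - 1 + 1 = (P + 2) / 3 := by omega
        have e2 : 3 * ((P + 2) / 3) - (3 * ((P + 2) / 3) - P) = P := by omega
        simp only [Bad, Finset.mem_filter, e1, e2]
        refine ⟨hl, by omega, fun x hx => ?_⟩
        have := hh x (by omega)
        rwa [Nat.zero_add, Nat.zero_add] at this
  have hbad : ∀ E ∈ Finset.range (n + 1), ∀ d ∈ Finset.range 3,
      (Bad E d).card ≤ (G (n - E)).card := by
    intro E hE d hd
    rw [Finset.mem_range] at hE hd
    refine Finset.card_le_card_of_injOn (fun l => l.drop (E + 1)) ?_ ?_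
    · intro l hl
      have hl := (Finset.mem_filter.1 (Finset.mem_coe.1 hl)).1
      obtain ⟨hlen, hgt⟩ := hmem l hl
      refine Finset.mem_coe.2 ((mem_G _ _).2 ⟨by rw [List.length_drop]; omega, ?_⟩)
      have := hgt.drop E
      rwa [List.drop_tail] at this
    · intro l hl l' hl' he
      obtain ⟨m1, b1, r1⟩ := Finset.mem_filter.1 (Finset.mem_coe.1 hl)
      obtain ⟨m2, -, r2⟩ := Finset.mem_filter.1 (Finset.mem_coe.1 hl')
      have len1 := (hmem l m1).1
      have len2 := (hmem l' m2).1
      have hfar : ∀ x, E + 1 ≤ x → l.getD x 0 = l'.getD x 0 := by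
        intro x hx
        have := congrArg (fun t => t.getD (x - (E + 1)) 0) he
        simp only [List.getD_eq_getElem?_getD, List.getElem?_drop] at this
        rw [show E + 1 + (x - (E + 1)) = x by omega] at this
        simpa only [List.getD_eq_getElem?_getD] using this
      refine List.ext_getElem (by omega) fun x h1 h2 => ?_
      rw [← List.getD_eq_getElem l 0 h1, ← List.getD_eq_getElem l' 0 h2]
      by_cases hx : x < E + 1
      · rw [r1 x hx, r2 x hx]
        exact hfar _ (by omega)
      · exact hfar x (by omega)
  calc 8 * (G n).card = Cn.card := hcard.symm
    _ ≤ _ := Finset.card_le_card hsub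
    _ ≤ _ := Finset.card_union_le _ _
    _ ≤ (G (n + 1)).card + ∑ E ∈ Finset.range (n + 1), 3 * (G (n - E)).card := by
      gcongr
      refine Finset.card_biUnion_le.trans (Finset.sum_le_sum fun E hE => ?_)
      refine Finset.card_biUnion_le.trans ((Finset.sum_le_sum (hbad E hE)).trans ?_)
      simp
    _ = _ := by
      rw [← Finset.mul_sum]
      congr 2
      have := Finset.sum_range_reflect (fun k => (G k).card) (n + 1)
      simpa using this

theorem G_growth (n : ℕ) : 2 ^ n ≤ (G n).card ∧
    ∑ k ∈ Finset.range (n + 1), (G k).card ≤ 2 * (G n).card := by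
  induction n with
  | zero => simp [G]
  | succ n ih =>
    have h := card_G_step n
    rw [Finset.sum_range_succ, pow_succ]
    omega

theorem count (n : ℕ) : 2 ^ (n / 240 + 1) ≤
    8 * {w : List (Fin 2) | w.length = n ∧ AvoidsABCBA w}.ncard := by
  set m := n / 240 + 1 with hm
  set S := {w : List (Fin 2) | w.length = n ∧ AvoidsABCBA w} with hS
  have hfin : S.Finite := (List.finite_length_eq (Fin 2) n).subset fun w hw => hw.1
  have hle : (G m).card ≤ (hfin.toFinset ×ˢ (Finset.univ : Finset (Fin 8))).card := by
    refine Finset.card_le_card_of_injOn (fun u => (code u n, u.getD (m - 1) 0)) ?_ ?_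
    · intro u hu
      obtain ⟨hl, hg⟩ := (mem_G _ _).1 (Finset.mem_coe.1 hu)
      refine Finset.mem_coe.2 (Finset.mem_product.2 ⟨?_, Finset.mem_univ _⟩)
      rw [Set.Finite.mem_toFinset]
      exact ⟨code_length u n, code_avoids u hg n (by omega)⟩
    · intro u hu v hv he
      obtain ⟨hl, -⟩ := (mem_G _ _).1 (Finset.mem_coe.1 hu)
      obtain ⟨hl', -⟩ := (mem_G _ _).1 (Finset.mem_coe.1 hv)
      simp only [Prod.mk.injEq] at he
      refine List.ext_getElem (by omega) fun x h1 h2 => ?_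
      rw [← List.getD_eq_getElem u 0 h1, ← List.getD_eq_getElem v 0 h2]
      by_cases hx : x = m - 1
      · rw [hx]; exact he.2
      · refine blocks_ne _ _ 0 (by norm_num) fun j hj => ?_
        rw [← yb_eq u x _ (by omega), ← yb_eq v x _ (by omega)]
        exact code_get u v n _ _ (by omega) (by omega) (by rw [he.1])
  rw [Finset.card_product, Finset.card_univ, Fintype.card_fin,
    ← Set.ncard_eq_toFinset_card S hfin] at hle
  have := (G_growth m).1
  omega

/-- The number of binary words of length `n` avoiding the formula
`ABCBA.CBABC` grows exponentially: there are a real constant `c > 1` and a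
threshold `N` such that for every `n ≥ N` there are at least `c ^ n` such
words. -/
theorem stmt_18 :
    ∃ c : ℝ, 1 < c ∧ ∃ N : ℕ, ∀ n, N ≤ n →
      c ^ n ≤ ({w : List (Fin 2) | w.length = n ∧ AvoidsABCBA w}.ncard : ℝ) := by
  refine ⟨(2 : ℝ) ^ ((1 : ℝ) / 480), Real.one_lt_rpow (by norm_num) (by norm_num), 1440,
    fun n hn => ?_⟩
  have h := count n
  set t := {w : List (Fin 2) | w.length = n ∧ AvoidsABCBA w}.ncard
  obtain ⟨k, hk⟩ : ∃ k, n / 240 = k + 2 := ⟨n / 240 - 2, by omega⟩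
  rw [hk] at h
  have h2 : 2 ^ k ≤ t := by
    have : 2 ^ (k + 2 + 1) = 8 * 2 ^ k := by ring
    omega
  have h3 : ((2 : ℝ) ^ ((1 : ℝ) / 480)) ^ n ≤ (2 : ℝ) ^ (k : ℝ) := by
    rw [← Real.rpow_natCast, ← Real.rpow_mul (by norm_num)]
    refine Real.rpow_le_rpow_of_exponent_le (by norm_num) ?_
    have h4 : n ≤ 480 * k := by omega
    have h5 : (n : ℝ) ≤ 480 * k := by exact_mod_cast h4
    linarith
  rw [Real.rpow_natCast] at h3
  exact h3.trans (by exact_mod_cast h2)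
end
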